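/- arXiv:1505.00980 — 2 statements merged into one kernel-verified Lean document; each statement's English description precedes it below -/
import Mathlib

section
/- Let z ∈ Σ with z ≠ e_j for every j ∈ S, let B := 𝓑(z) = {j : z_j > 0}, and let ℙ be an absorbing solution of the ℒ-martingale problem starting at z. Then for every q > b, the expectation of the first absorption time satisfies E[σ₁] ≤ |B|^{max(q−1,1)} / ((q+1)(q−b) d(B)), where d(B) := min_{j∈B} m_j Σ_{k∈B} r^B(j,k). In particular ℙ[σ₁ < ∞] = 1. -/
/-!
The bound is Dynkin's formula for `h(x) = ∑_{j ∈ B} x_j ^ (q + 1)`, a function with values in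
`[0, 1]` on the simplex.

* Drift. On the open face `{x_j > 0 for all j ∈ B}`, keeping from the first order part of `𝔏_B` only
  the mass leaving each site, and using that `m` is invariant for the trace chain on `B` to symmetrize
  the second order part, one gets `𝔏_B h ≥ (q + 1)(q - b) ∑_j m_j λ_j x_j ^ (q - 1)` with
  `λ_j = ∑_k r^B(j, k)` (`lopB_powSum_ge`). Some coordinate is at least `1 / |B|`, so the right-hand
  side is at least `c = (q + 1)(q - b) d(B) / |B| ^ max (q - 1) 1` (`weighted_sum_ge`). The facts on
  the trace chain (nonnegative rates, positive total rates, invariance of `m`) follow from the minimum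
  principle for harmonic extensions; in particular `d(B) > 0`.

* Localization. Since `h` is not in `D₀(Σ)`, it is multiplied by smooth cutoffs that equal `1` where
  all coordinates in `B` are at least `ε` (`testF`). The martingale problem then yields a martingale
  whose increments are at most `1 - ∫ ℒF`, because `0 ≤ F ≤ 1` and the jump sum is nondecreasing.

* Stopping. The martingale property is only used along deterministic grids: stopping at the first
  grid time outside `{x_j ≥ ε}`, refining the grid and applying Fatou's lemma gives
  `c E[τ_ε ∧ t] ≤ 1` for the exit time `τ_ε` of that set (`exit_bound`). To avoid the measurability
  of exit times, the conclusion is phrased with a measurable upper bound `G` of `c (τ_ε ∧ t)`.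
  Absorption with `n = 0` keeps the path in the face of `B`, where the drift bound applies.

* Limit. Before `σ₁` the coordinates in `B` are bounded below on compact time intervals
  (`exists_lower_bound`), so `σ₁` is at most the lower limit of `τ_ε ∧ t` as `ε → 0` and `t → ∞`, and
  Fatou's lemma gives `E[σ₁] ≤ 1 / c`.
-/

open MeasureTheory Set
open scoped NNReal ENNReal

noncomputable section

variable {S : Type*} [Fintype S] [DecidableEq S]

/-- The generator of the underlying Markov chain. -/
def gen (r : S → S → ℝ) (f : S → ℝ) (j : S) : ℝ := ∑ k, r j k * (f k - f j)

/-- Irreducibility of the jump rates. -/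
def IrreducibleRates (r : S → S → ℝ) : Prop :=
  ∀ j k : S, j ≠ k → Relation.TransGen (fun a c => 0 < r a c) j k

/-- canonical basis vector of ℝ^S -/
def ebasis (j : S) : S → ℝ := Pi.single j 1

/-- the vectors v_j = Σ_k r(j,k)(e_k - e_j) -/
def vvec (r : S → S → ℝ) (j : S) : S → ℝ := ∑ k, r j k • (ebasis k - ebasis j)

/-- second directional derivative (∂_d)² H (x) -/
def secondD (H : (S → ℝ) → ℝ) (d x : S → ℝ) : ℝ :=
  fderiv ℝ (fun y => fderiv ℝ H y d) x d

/-- membership in the class 𝓓_j -/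
def memD (r : S → S → ℝ) (j : S) (H : (S → ℝ) → ℝ) : Prop :=
  ContDiff ℝ 2 H ∧
  ContinuousOn (fun x => if 0 < x j then fderiv ℝ H x (vvec r j) / x j else 0)
    (stdSimplex ℝ S)

/-- the operator 𝔏 -/
def Lop (r : S → S → ℝ) (m : S → ℝ) (b : ℝ) (H : (S → ℝ) → ℝ) (x : S → ℝ) : ℝ :=
  b * ∑ j, (if x j ≠ 0 then (m j / x j) * fderiv ℝ H x (vvec r j) else 0)
    + (1 / 2) * ∑ j, ∑ k, m j * r j k * secondD H (ebasis k - ebasis j) x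

/-- the path space C(ℝ₊, Σ) -/
abbrev PathSp (S : Type*) [Fintype S] := C(ℝ≥0, ↥(stdSimplex ℝ S))

instance : MeasurableSpace (PathSp S) := borel _

/-- the natural filtration 𝓕_t = σ(X_s : s ≤ t) -/
def filtr (S : Type*) [Fintype S] (t : ℝ≥0) : MeasurableSpace (PathSp S) :=
  ⨆ s ∈ Set.Iic t,
    MeasurableSpace.comap (fun ω : PathSp S => ((ω s : S → ℝ))) inferInstance

/-- the martingale property with respect to the natural filtration -/
def IsMartingale (μ : Measure (PathSp S)) (M : ℝ≥0 → PathSp S → ℝ) : Prop :=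
  (∀ t, Integrable (M t) μ) ∧
  (∀ t, @Measurable _ _ (filtr S t) _ (M t)) ∧
  (∀ s t : ℝ≥0, s ≤ t → ∀ A : Set (PathSp S), MeasurableSet[filtr S s] A →
    ∫ ω in A, M t ω ∂μ = ∫ ω in A, M s ω ∂μ)

/-- the process H(X_t) - ∫₀ᵗ (𝔏H)(X_s) ds -/
def martProc (r : S → S → ℝ) (m : S → ℝ) (b : ℝ) (H : (S → ℝ) → ℝ)
    (t : ℝ≥0) (ω : PathSp S) : ℝ :=
  H (ω t : S → ℝ) - ∫ s in Set.Icc (0:ℝ) (t:ℝ), Lop r m b H ((ω s.toNNReal : S → ℝ))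

/-- μ is a solution of the 𝔏-martingale problem -/
def SolvesMP (r : S → S → ℝ) (m : S → ℝ) (b : ℝ) (μ : Measure (PathSp S)) : Prop :=
  ∀ H : (S → ℝ) → ℝ, (∀ j : S, memD r j H) → IsMartingale μ (martProc r m b H)

/-- μ starts at x -/
def StartsAt (μ : Measure (PathSp S)) (x : S → ℝ) : Prop :=
  μ {ω : PathSp S | (ω 0 : S → ℝ) = x} = 1
/-- time shift θ_t on path space -/
def shiftPath (t : ℝ≥0) (ω : PathSp S) : PathSp S :=
  ω.comp ⟨fun s => t + s, by continuity⟩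

/-- the hitting time h_B = inf{t ≥ 0 : ∏_{j∈B} X_t(j) = 0} (with inf ∅ = ∞) -/
def hitB (B : Finset S) (ω : PathSp S) : ℝ≥0∞ :=
  sInf ((fun t : ℝ≥0 => (t : ℝ≥0∞)) '' {t | ∏ j ∈ B, (ω t : S → ℝ) j = 0})

open Classical in
/-- the pair (σ_n, 𝓑_n) defined recursively -/
def sigB : ℕ → PathSp S → ℝ≥0∞ × Finset S
  | 0, ω => (0, Finset.univ.filter fun j => 0 < (ω 0 : S → ℝ) j)
  | n + 1, ω =>
    let p := sigB n ω
    if p.1 < ⊤ then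
      let σ' := p.1 + hitB p.2 (shiftPath p.1.toNNReal ω)
      (σ', if σ' < ⊤ then Finset.univ.filter (fun j => 0 < (ω σ'.toNNReal : S → ℝ) j)
           else p.2)
    else (⊤, p.2)

/-- the absorption times σ_n -/
def sigmaT (n : ℕ) (ω : PathSp S) : ℝ≥0∞ := (sigB n ω).1

/-- the sets 𝓑_n -/
def Bn (n : ℕ) (ω : PathSp S) : Finset S := (sigB n ω).2

/-- μ is absorbing: for every n, a.s. the coordinates in 𝓐_n = 𝓑_nᶜ vanish for all t ≥ σ_n -/
def Absorbing (μ : Measure (PathSp S)) : Prop :=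
  ∀ n : ℕ,
    μ {ω : PathSp S | ∀ t : ℝ≥0, sigmaT n ω ≤ (t : ℝ≥0∞) →
        ∀ j, j ∉ Bn n ω → (ω t : S → ℝ) j = 0} = 1
/-- u k is the 𝓛-harmonic extension of the indicator of k on B -/
def HarmonicExt (r : S → S → ℝ) (B : Finset S) (u : S → S → ℝ) : Prop :=
  ∀ k ∈ B, (∀ j ∈ B, u k j = if j = k then 1 else 0) ∧ (∀ j ∉ B, gen r (u k) j = 0)

/-- the trace jump rates r^B, expressed via the harmonic extensions u -/
def traceR (r : S → S → ℝ) (u : S → S → ℝ) (j k : S) : ℝ :=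
  if j = k then 0 else ∑ ℓ, r j ℓ * u k ℓ

/-- the vectors v_j^B in ℝ^B -/
def vvecB (rB : S → S → ℝ) (B : Finset S) (j : ↥B) : ↥B → ℝ :=
  ∑ k : ↥B, rB j.1 k.1 • ((Pi.single k 1 : ↥B → ℝ) - Pi.single j 1)

/-- the operator 𝔏_B acting on C²(Σ_B) -/
def LopB (rB : S → S → ℝ) (m : S → ℝ) (b : ℝ) (B : Finset S)
    (h : (↥B → ℝ) → ℝ) (x : ↥B → ℝ) : ℝ :=
  b * ∑ j : ↥B, (if 0 < x j then (m j.1 / x j) * fderiv ℝ h x (vvecB rB B j) else 0)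
    + (1 / 2) * ∑ j : ↥B, ∑ k : ↥B, m j.1 * rB j.1 k.1 *
        fderiv ℝ (fun y => fderiv ℝ h y ((Pi.single k 1 : ↥B → ℝ) - Pi.single j 1)) x
          ((Pi.single k 1 : ↥B → ℝ) - Pi.single j 1)

/-- extension of x ∈ ℝ^B by zero to ℝ^S -/
def inclB (B : Finset S) (x : ↥B → ℝ) : S → ℝ :=
  fun j => if h : j ∈ B then x ⟨j, h⟩ else 0

/-- restriction of the coordinates to B -/
def restB (B : Finset S) (y : S → ℝ) : ↥B → ℝ := fun j => y j.1

open Classical in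
/-- the function [F]_B -/
def FB (B : Finset S) (F : (S → ℝ) → ℝ) (x : ↥B → ℝ) : ℝ :=
  if ∀ j, 0 < x j then F (inclB B x) else 0

/-- g is a family of C² representatives of the functions [F]_B; the existence of such a
family (together with the support condition) states that F belongs to D₀(Σ). -/
def RepD0 (F : (S → ℝ) → ℝ) (g : (B : Finset S) → (↥B → ℝ) → ℝ) : Prop :=
  ∀ B : Finset S, 2 ≤ B.card →
    ContDiff ℝ 2 (g B) ∧
    (∀ x ∈ stdSimplex ℝ ↥B, g B x = FB B F x) ∧
    (∃ ε > 0, ∀ x ∈ stdSimplex ℝ ↥B, (∃ j, x j < ε) → FB B F x = 0)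

open Classical in
/-- the set 𝓑(x) = {j : x_j > 0} -/
def Bpos (x : S → ℝ) : Finset S := Finset.univ.filter fun j => 0 < x j

/-- the operator ℒ, defined through the family of representatives g -/
def Lcal (r : S → S → ℝ) (m : S → ℝ) (b : ℝ) (u : Finset S → S → S → ℝ)
    (g : (B : Finset S) → (↥B → ℝ) → ℝ) (x : S → ℝ) : ℝ :=
  if 2 ≤ (Bpos x).card then
    LopB (traceR r (u (Bpos x))) m b (Bpos x) (g (Bpos x)) (restB (Bpos x) x)
  else 0

open Classical in
/-- the sum Σ_{1 ≤ n ≤ N_t ∧ |S|} F(X_{σ_n}) -/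
def jumpSum (F : (S → ℝ) → ℝ) (t : ℝ≥0) (ω : PathSp S) : ℝ :=
  ∑ n ∈ Finset.Icc 1 (Fintype.card S),
    if sigmaT n ω ≤ (t : ℝ≥0∞) then F ((ω (sigmaT n ω).toNNReal : S → ℝ)) else 0

/-- the process F(X_t) - ∫₀ᵗ ℒF(X_s) ds - Σ_{1 ≤ n ≤ N_t ∧ |S|} F(X_{σ_n}) -/
def martProcL (r : S → S → ℝ) (m : S → ℝ) (b : ℝ) (u : Finset S → S → S → ℝ)
    (g : (B : Finset S) → (↥B → ℝ) → ℝ) (F : (S → ℝ) → ℝ)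
    (t : ℝ≥0) (ω : PathSp S) : ℝ :=
  F (ω t : S → ℝ)
    - (∫ s in Set.Icc (0:ℝ) (t:ℝ), Lcal r m b u g ((ω s.toNNReal : S → ℝ)))
    - jumpSum F t ω

/-- μ solves the ℒ-martingale problem -/
def SolvesMPL (r : S → S → ℝ) (m : S → ℝ) (b : ℝ) (u : Finset S → S → S → ℝ)
    (μ : Measure (PathSp S)) : Prop :=
  ∀ (F : (S → ℝ) → ℝ) (g : (B : Finset S) → (↥B → ℝ) → ℝ),
    RepD0 F g → IsMartingale μ (martProcL r m b u g F)

/-! ### Stopping along a deterministic grid -/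

open Filter Topology

/-- Along one path with drift `Λ`, let `t k / (n + 1)` be the first grid point outside `Z` (or `t`
itself). Up to the true exit time from `Z` the drift is at least `c`, and the grid point exceeds
that exit time by `o(1)` only, so the integrated drift is asymptotically at least `c T` whenever the
path stays in `Z` on `[0, T)`. -/
lemma path_lower (Λ : ℝ → ℝ) (Z : Set ℝ) (hZ : IsClosed Z) (c C t T δ : ℝ) (ht : 0 < t)
    (hTt : T ≤ t) (hm : Measurable Λ) (hC : ∀ s, |Λ s| ≤ C)
    (hc0 : 0 ≤ c) (hc : ∀ s ∈ Z, c ≤ Λ s) (hZT : Ico 0 T ⊆ Z) (hδ : 0 < δ) :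
    ∀ᶠ n : ℕ in atTop, ∀ k : ℕ, k ≤ n + 1 → (∀ i < k, t * i / ((n : ℝ) + 1) ∈ Z) →
      (k = n + 1 ∨ t * k / ((n : ℝ) + 1) ∉ Z) →
      c * T - δ ≤ ∫ s in Icc (0 : ℝ) (t * k / ((n : ℝ) + 1)), Λ s := by
  have hC0 : 0 ≤ C := (abs_nonneg _).trans (hC 0)
  have hLint : ∀ a b : ℝ, IntervalIntegrable Λ volume a b := fun a b =>
    (intervalIntegrable_const (c := C)).mono_fun hm.aestronglyMeasurable
      (Eventually.of_forall fun s => by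
        simpa [abs_of_nonneg hC0] using hC s)
  have hIcc : ∀ e : ℝ, 0 ≤ e → ∫ s in Icc (0 : ℝ) e, Λ s = ∫ s in (0 : ℝ)..e, Λ s := by
    intro e he
    rw [integral_Icc_eq_integral_Ioc, intervalIntegral.integral_of_le he]
  have hlow : ∀ a b x : ℝ, a ≤ b → (∀ s ∈ Ioo a b, x ≤ Λ s) →
      x * (b - a) ≤ ∫ s in a..b, Λ s := by
    intro a b x hab hx
    have := intervalIntegral.integral_mono_on_of_le_Ioo hab
      (intervalIntegrable_const (c := x)) (hLint a b) hx
    simpa [mul_comm] using this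
  by_cases hV : Icc 0 t ⊆ Z
  · refine Eventually.of_forall fun n k hk _ hfirst => ?_
    have hn : (0 : ℝ) < (n : ℝ) + 1 := by positivity
    have hmem : t * k / ((n : ℝ) + 1) ∈ Z := by
      apply hV
      refine ⟨by positivity, ?_⟩
      rw [div_le_iff₀ hn]
      have : (k : ℝ) ≤ (n : ℝ) + 1 := by exact_mod_cast hk
      nlinarith
    have hk' : k = n + 1 := by
      rcases hfirst with h | h
      · exact h
      · exact absurd hmem h
    have he : t * k / ((n : ℝ) + 1) = t := by
      rw [hk']; push_cast; field_simp
    rw [he, hIcc t ht.le]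
    have := hlow 0 t c ht.le fun s hs => hc s (hV ⟨hs.1.le, hs.2.le⟩)
    nlinarith [mul_le_mul_of_nonneg_left hTt hc0]
  · set V : Set ℝ := Icc 0 t \ Z with hVdef
    have hVne : V.Nonempty := by
      obtain ⟨s, hs, hsZ⟩ := Set.not_subset.1 hV
      exact ⟨s, hs, hsZ⟩
    have hVb : BddBelow V := ⟨0, fun s hs => hs.1.1⟩
    set τ := sInf V with hτ
    have hτ0 : 0 ≤ τ := le_csInf hVne fun s hs => hs.1.1
    have hTτ : T ≤ τ := le_csInf hVne fun s hs => by
      by_contra h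
      exact hs.2 (hZT ⟨hs.1.1, not_le.1 h⟩)
    have hδ' : 0 < δ / (C + 1) := by positivity
    obtain ⟨s₀, hs₀, hs₀τ⟩ := exists_lt_of_csInf_lt hVne
      (show sInf V < τ + δ / (C + 1) by linarith)
    -- the grid points just below `s₀` converge to `s₀`, hence eventually lie outside `Z`
    have hn1 : Tendsto (fun n : ℕ => (n : ℝ) + 1) atTop atTop :=
      tendsto_atTop_add_const_right _ _ tendsto_natCast_atTop_atTop
    have hlim : Tendsto (fun n : ℕ =>
        t * ((⌊s₀ / t * ((n : ℝ) + 1)⌋₊ : ℝ) / ((n : ℝ) + 1))) atTop (𝓝 s₀) := by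
      have h1 := (tendsto_nat_floor_mul_div_atTop
        (show (0 : ℝ) ≤ s₀ / t from div_nonneg hs₀.1.1 ht.le)).comp hn1
      have h2 := h1.const_mul t
      rwa [mul_div_cancel₀ _ ht.ne'] at h2
    filter_upwards [hlim.eventually (hZ.isOpen_compl.mem_nhds hs₀.2)] with n hn k hk hbefore hfirst
    have hnp : (0 : ℝ) < (n : ℝ) + 1 := by positivity
    set i := ⌊s₀ / t * ((n : ℝ) + 1)⌋₊ with hi
    rw [← mul_div_assoc] at hn
    have hki : k ≤ i := by
      by_contra h
      exact hn (hbefore i (not_le.1 h))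
    have his : t * (i : ℝ) / ((n : ℝ) + 1) ≤ s₀ := by
      have h1 : (i : ℝ) ≤ s₀ / t * ((n : ℝ) + 1) :=
        Nat.floor_le (mul_nonneg (div_nonneg hs₀.1.1 ht.le) hnp.le)
      rw [div_le_iff₀ hnp]
      calc t * (i : ℝ) ≤ t * (s₀ / t * ((n : ℝ) + 1)) := by gcongr
        _ = s₀ * ((n : ℝ) + 1) := by field_simp
    set e := t * (k : ℝ) / ((n : ℝ) + 1) with he
    have hes : e ≤ s₀ := by
      refine le_trans ?_ his
      have : (k : ℝ) ≤ i := by exact_mod_cast hki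
      rw [he]; gcongr
    have he0 : 0 ≤ e := by positivity
    have hτe : τ ≤ e := by
      rcases hfirst with h | h
      · have : e = t := by rw [he, h]; push_cast; field_simp
        rw [this]
        exact (csInf_le hVb hs₀).trans hs₀.1.2
      · exact csInf_le hVb ⟨⟨he0, hes.trans hs₀.1.2⟩, h⟩
    rw [hIcc e he0, ← intervalIntegral.integral_add_adjacent_intervals (hLint 0 τ) (hLint τ e)]
    have h1 := hlow 0 τ c hτ0 fun s hs => by
      by_contra hcon
      have hsZ : s ∉ Z := fun h => hcon (hc s h)
      have : τ ≤ s := csInf_le hVb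
        ⟨⟨hs.1.le, (hs.2.le.trans hτe).trans (hes.trans hs₀.1.2)⟩, hsZ⟩
      linarith [hs.2]
    have h2 := hlow τ e (-C) hτe fun s _ => (abs_le.1 (hC s)).1
    have h3 : C * (e - τ) ≤ δ := by
      have h4 : e - τ ≤ δ / (C + 1) := by linarith
      have h5 : (C + 1) * (δ / (C + 1)) = δ := by field_simp
      nlinarith [mul_le_mul_of_nonneg_left h4 hC0, sub_nonneg.2 hτe]
    nlinarith [mul_le_mul_of_nonneg_left hTτ hc0]

/-- Summation by parts up to the first index at which `p` fails. -/
lemma stopped_sum (a : ℕ → ℝ) (p : ℕ → Prop) [∀ i, Decidable (∀ i' ≤ i, p i')] (N : ℕ) :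
    ∃ k ≤ N, (∀ i < k, p i) ∧ (k = N ∨ ¬ p k) ∧
      ∑ i ∈ Finset.range N, (if ∀ i' ≤ i, p i' then a (i + 1) - a i else 0) = a k - a 0 := by
  induction N with
  | zero => exact ⟨0, le_rfl, by simp, Or.inl rfl, by simp⟩
  | succ N ih =>
    obtain ⟨k, hkN, hlt, hfirst, hsum⟩ := ih
    by_cases h : k = N ∧ p k
    · obtain ⟨rfl, hp⟩ := h
      refine ⟨k + 1, le_rfl, fun i hi => ?_, Or.inl rfl, ?_⟩
      · rcases Nat.lt_succ_iff_lt_or_eq.1 hi with h | rfl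
        exacts [hlt i h, hp]
      · have : ∀ i' ≤ k, p i' := fun i' hi' => by
          rcases hi'.lt_or_eq with h | rfl
          exacts [hlt _ h, hp]
        rw [Finset.sum_range_succ, hsum, if_pos this]; ring
    · have hpk : ¬ p k := by
        rcases hfirst with h' | h'
        · exact fun hp => h ⟨h', hp⟩
        · exact h'
      refine ⟨k, hkN.trans N.le_succ, hlt, Or.inr hpk, ?_⟩
      rw [Finset.sum_range_succ, hsum, if_neg fun hall => hpk (hall k hkN), add_zero]

/-- The measurable structure on path space is by definition the Borel one. -/
instance pathBorel : BorelSpace (PathSp S) := ⟨rfl⟩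

lemma continuous_coord (s : ℝ≥0) (j : S) :
    Continuous fun ω : PathSp S => (ω s : S → ℝ) j :=
  (continuous_apply j).comp (continuous_subtype_val.comp (continuous_eval_const s))

lemma filtr_le (t : ℝ≥0) : filtr S t ≤ (inferInstance : MeasurableSpace (PathSp S)) := by
  refine iSup₂_le fun s _ => ?_
  rw [← measurable_iff_comap_le]
  exact measurable_pi_lambda _ fun j => (continuous_coord s j).measurable

lemma measurable_filtr (s t : ℝ≥0) (h : s ≤ t) :
    Measurable[filtr S t] (fun ω : PathSp S => (ω s : S → ℝ)) := by
  rw [measurable_iff_comap_le]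
  exact le_iSup₂_of_le s h le_rfl

/-- `M` is a martingale whose increment from time `0` is at most `1` minus an integrated drift `Λ`.
A martingale stopped at the first grid time at which the path is outside the
closed set `K` still has constant expectation; letting the mesh go to `0` and applying Fatou's
lemma turns the lower bound `c` on the drift inside `K` into a bound on the expected time spent
before leaving `K`. -/
lemma exit_bound (P : Measure (PathSp S)) [IsProbabilityMeasure P]
    (M : ℝ≥0 → PathSp S → ℝ) (hM : IsMartingale P M) (Λ : PathSp S → ℝ → ℝ)
    (K : Set (S → ℝ)) (hK : IsClosed K) (c C : ℝ) (t : ℝ≥0) (ht : 0 < t) (hc0 : 0 ≤ c)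
    (hC0 : 0 ≤ C) (hm : ∀ ω, Measurable (Λ ω)) (hC : ∀ ω s, |Λ ω s| ≤ C)
    (hc : ∀ᵐ ω ∂P, ∀ s : ℝ, (ω s.toNNReal : S → ℝ) ∈ K → c ≤ Λ ω s)
    (hMb : ∀ ω, ∀ s : ℝ≥0, M s ω - M 0 ω ≤ 1 - ∫ x in Icc (0 : ℝ) s, Λ ω x) :
    ∃ G : PathSp S → ℝ≥0∞, Measurable G ∧ ∫⁻ ω, G ω ∂P ≤ 1 ∧
      ∀ᵐ ω ∂P, ∀ T : ℝ, T ≤ t →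
        (∀ s ∈ Ico (0 : ℝ) T, (ω s.toNNReal : S → ℝ) ∈ K) → ENNReal.ofReal (c * T) ≤ G ω := by
  classical
  obtain ⟨hMint, hMmeas, hMart⟩ := hM
  have hMmeas' : ∀ s, Measurable (M s) := fun s => (hMmeas s).mono (filtr_le s) le_rfl
  let gr : ℕ → ℕ → ℝ≥0 := fun n i => t * i / ((n : ℝ≥0) + 1)
  have hgr : ∀ n i, ((gr n i : ℝ≥0) : ℝ) = t * i / ((n : ℝ) + 1) := fun n i => by simp [gr]
  have hgr_mono : ∀ n, Monotone (gr n) := fun n i i' h => by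
    have : (i : ℝ≥0) ≤ i' := by exact_mod_cast h
    simp only [gr]; gcongr
  let E : ℕ → ℕ → Set (PathSp S) := fun n i => {ω | ∀ i' ≤ i, (ω (gr n i') : S → ℝ) ∈ K}
  have hE : ∀ n i, MeasurableSet[filtr S (gr n i)] (E n i) := by
    intro n i
    have : E n i = ⋂ i' ∈ Finset.range (i + 1), (fun ω : PathSp S => (ω (gr n i') : S → ℝ)) ⁻¹' K := by
      ext ω; simp [E]
    rw [this]
    refine Finset.measurableSet_biInter _ fun i' hi' => ?_
    exact measurable_filtr _ _ (hgr_mono n (Nat.lt_succ_iff.1 (Finset.mem_range.1 hi'))) hK.measurableSet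
  let R : ℕ → PathSp S → ℝ := fun n ω => ∑ i ∈ Finset.range (n + 1),
    (E n i).indicator (fun ω => M (gr n (i + 1)) ω - M (gr n i) ω) ω
  have hEm : ∀ n i, MeasurableSet (E n i) := fun n i => filtr_le _ _ (hE n i)
  have hRint1 : ∀ n i, Integrable ((E n i).indicator
      (fun ω => M (gr n (i + 1)) ω - M (gr n i) ω)) P := fun n i =>
    ((hMint _).sub (hMint _)).indicator (hEm n i)
  have hRint : ∀ n, Integrable (R n) P := fun n => integrable_finsetSum _ fun i _ => hRint1 n i
  have hRmeas : ∀ n, Measurable (R n) := fun n => Finset.measurable_sum _ fun i _ =>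
    ((hMmeas' _).sub (hMmeas' _)).indicator (hEm n i)
  have hR0 : ∀ n, ∫ ω, R n ω ∂P = 0 := by
    intro n
    rw [integral_finsetSum _ fun i _ => hRint1 n i]
    refine Finset.sum_eq_zero fun i _ => ?_
    rw [integral_indicator (hEm n i),
      integral_sub (hMint _).integrableOn (hMint _).integrableOn,
      hMart _ _ (hgr_mono n (Nat.le_succ i)) _ (hE n i), sub_self]
  have hfirst : ∀ n ω, ∃ k ≤ n + 1, (∀ i < k, (ω (gr n i) : S → ℝ) ∈ K) ∧
      (k = n + 1 ∨ (ω (gr n k) : S → ℝ) ∉ K) ∧ R n ω = M (gr n k) ω - M 0 ω := by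
    intro n ω
    obtain ⟨k, hk, h1, h2, h3⟩ := stopped_sum (fun i => M (gr n i) ω)
      (fun i => (ω (gr n i) : S → ℝ) ∈ K) (n + 1)
    refine ⟨k, hk, h1, h2, ?_⟩
    have hgr0 : gr n 0 = 0 := by simp [gr]
    rw [hgr0] at h3
    rw [← h3]
    exact Finset.sum_congr rfl fun i _ => by simp only [E, indicator_apply, mem_ofPred_eq]
  have hbd : ∀ n ω, ∀ k, k ≤ n + 1 →
      -(C * t) ≤ ∫ x in Icc (0 : ℝ) (gr n k : ℝ≥0), Λ ω x := by
    intro n ω k hk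
    have hle : ((gr n k : ℝ≥0) : ℝ) ≤ t := by
      rw [hgr, div_le_iff₀ (by positivity)]
      have : (k : ℝ) ≤ (n : ℝ) + 1 := by exact_mod_cast hk
      exact mul_le_mul_of_nonneg_left this t.2
    have h := norm_setIntegral_le_of_norm_le_const (μ := volume) (s := Icc (0 : ℝ) (gr n k : ℝ≥0))
      (f := Λ ω) (C := C) (by simp) (fun x _ => hC ω x)
    rw [Real.volume_real_Icc_of_le (gr n k).coe_nonneg, sub_zero, Real.norm_eq_abs] at h
    have h' := (abs_le.1 h).1
    nlinarith [mul_le_mul_of_nonneg_left hle hC0]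
  have hRle : ∀ n ω, 0 ≤ 1 - R n ω + C * t := by
    intro n ω
    obtain ⟨k, hk, -, -, h3⟩ := hfirst n ω
    linarith [hMb ω (gr n k), hbd n ω k hk]
  let H : ℕ → PathSp S → ℝ≥0∞ := fun n ω => ENNReal.ofReal (1 - R n ω + C * t)
  have hHm : ∀ n, Measurable (H n) := fun n =>
    (((hRmeas n).const_sub 1).add_const (C * t)).ennreal_ofReal
  have hHint : ∀ n, ∫⁻ ω, H n ω ∂P = ENNReal.ofReal (1 + C * t) := by
    intro n
    have hi : Integrable (fun ω => 1 - R n ω + C * t) P :=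
      ((integrable_const 1).sub (hRint n)).add (integrable_const _)
    rw [← ofReal_integral_eq_lintegral_ofReal hi (Eventually.of_forall (hRle n))]
    congr 1
    have h1 : Integrable (fun ω => 1 - R n ω) P := (integrable_const 1).sub (hRint n)
    rw [integral_add h1 (integrable_const _), integral_sub (integrable_const 1) (hRint n), hR0 n]
    simp
  have hG'm : Measurable fun ω => liminf (fun n => H n ω) atTop := Measurable.liminf hHm
  have hG'int : ∫⁻ ω, liminf (fun n => H n ω) atTop ∂P ≤ ENNReal.ofReal (1 + C * t) := by
    refine (lintegral_liminf_le hHm).trans ?_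
    simp only [hHint]
    simp
  have hG'low : ∀ᵐ ω ∂P, ∀ T : ℝ, T ≤ t →
      (∀ s ∈ Ico (0 : ℝ) T, (ω s.toNNReal : S → ℝ) ∈ K) →
      ENNReal.ofReal (c * T + C * t) ≤ liminf (fun n => H n ω) atTop := by
    filter_upwards [hc] with ω hcω T hTt hT
    have hZ : IsClosed {s : ℝ | (ω s.toNNReal : S → ℝ) ∈ K} :=
      hK.preimage (continuous_subtype_val.comp (ω.continuous.comp continuous_real_toNNReal))
    have hev : ∀ δ : ℝ, 0 < δ →
        ENNReal.ofReal (c * T + C * t - δ) ≤ liminf (fun n => H n ω) atTop := by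
      intro δ hδ
      refine le_liminf_of_le (by isBoundedDefault) ?_
      filter_upwards [path_lower (Λ ω) _ hZ c C t T δ (by exact_mod_cast ht) hTt (hm ω) (hC ω) hc0
        (fun s hs => hcω s hs) hT hδ] with n hn
      obtain ⟨k, hk, h1, h2, h3⟩ := hfirst n ω
      have hgrm : ∀ i : ℕ, ((t : ℝ) * i / ((n : ℝ) + 1)).toNNReal = gr n i := fun i => by
        rw [← hgr, Real.toNNReal_coe]
      have := hn k hk (fun i hi => by show _ ∈ K; rw [hgrm]; exact h1 i hi)
        (h2.imp_right fun h => by show ¬ _ ∈ K; rw [hgrm]; exact h)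
      rw [← hgr] at this
      exact ENNReal.ofReal_le_ofReal (by linarith [hMb ω (gr n k)])
    have hlim : Tendsto (fun δ : ℝ => ENNReal.ofReal (c * T + C * t - δ)) (𝓝[>] 0)
        (𝓝 (ENNReal.ofReal (c * T + C * t))) := by
      refine ENNReal.tendsto_ofReal ?_
      have : Tendsto (fun δ : ℝ => c * T + C * t - δ) (𝓝 0) (𝓝 (c * T + C * t - 0)) :=
        tendsto_const_nhds.sub tendsto_id
      rw [sub_zero] at this
      exact this.mono_left nhdsWithin_le_nhds
    refine le_of_tendsto hlim ?_
    filter_upwards [self_mem_nhdsWithin] with δ hδ using hev δ hδ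
  refine ⟨fun ω => liminf (fun n => H n ω) atTop - ENNReal.ofReal (C * t),
    hG'm.sub_const _, ?_, ?_⟩
  · rw [lintegral_sub measurable_const (by simp)]
    · rw [lintegral_const, measure_univ, mul_one, tsub_le_iff_right]
      refine hG'int.trans ?_
      rw [ENNReal.ofReal_add zero_le_one (by positivity), ENNReal.ofReal_one]
    · filter_upwards [hG'low] with ω h
      have := h 0 t.2 (by simp)
      simpa using this
  · filter_upwards [hG'low] with ω h T hTt hT
    rcases le_total 0 (c * T) with h0 | h0
    · refine ENNReal.le_sub_of_add_le_right (by simp) ?_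
      refine le_trans ?_ (h T hTt hT)
      rw [ENNReal.ofReal_add h0 (by positivity)]
    · rw [ENNReal.ofReal_of_nonpos h0]
      exact bot_le

/-! ### The trace chain -/

lemma gen_neg (r : S → S → ℝ) (f : S → ℝ) (j : S) : gen r (fun i => -f i) j = - gen r f j := by
  simp only [gen, ← Finset.sum_neg_distrib]
  exact Finset.sum_congr rfl fun k _ => by ring

/-- The set of minimizers of `f` is closed under jumps out of points where `f` is harmonic. -/
lemma eq_of_harmonic (r : S → S → ℝ) (hr : ∀ j k, 0 ≤ r j k) (f : S → ℝ) (a c : S)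
    (hmin : ∀ k, f a ≤ f k) (hgen : gen r f a = 0) (hac : 0 < r a c) : f c = f a := by
  have h := (Finset.sum_eq_zero_iff_of_nonneg fun k _ =>
    mul_nonneg (hr a k) (sub_nonneg.2 (hmin k))).1 hgen c (Finset.mem_univ c)
  rcases mul_eq_zero.1 h with h | h
  · exact absurd h hac.ne'
  · linarith

/-- Minimum principle for functions harmonic off `B`. -/
lemma nonneg_of_harmonic (r : S → S → ℝ) (hr : ∀ j k, 0 ≤ r j k) (hirr : IrreducibleRates r)
    (B : Finset S) (hBne : B.Nonempty) (f : S → ℝ) (hf : ∀ j ∉ B, gen r f j = 0)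
    (hB : ∀ j ∈ B, 0 ≤ f j) (j : S) : 0 ≤ f j := by
  obtain ⟨k, hk⟩ := hBne
  obtain ⟨a, -, ha⟩ := Finset.exists_min_image Finset.univ f ⟨k, Finset.mem_univ k⟩
  have ha' : ∀ i, f a ≤ f i := fun i => ha i (Finset.mem_univ i)
  by_contra hj
  have hneg : f a < 0 := (ha' j).trans_lt (not_le.1 hj)
  have hak : a ≠ k := fun h => absurd (hB k hk) (by rw [← h]; exact not_le.2 hneg)
  have key : ∀ c, Relation.TransGen (fun a c => 0 < r a c) a c → f c = f a := by
    intro c hc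
    have step : ∀ x y, f x = f a → 0 < r x y → f y = f a := by
      intro x y hx hxy
      have hxB : x ∉ B := fun h => absurd (hB x h) (by rw [hx]; exact not_le.2 hneg)
      rw [← hx]
      exact eq_of_harmonic r hr f x y (fun i => hx ▸ ha' i) (hf x hxB) hxy
    induction hc with
    | single h => exact step _ _ rfl h
    | tail _ h ih => exact step _ _ ih h
  have := key k (hirr a k hak)
  linarith [hB k hk]

lemma harmonicExt_nonneg (r : S → S → ℝ) (hr : ∀ j k, 0 ≤ r j k)
    (hirr : IrreducibleRates r) (B : Finset S) (w : S → S → ℝ)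
    (hw : HarmonicExt r B w) (k : S) (hk : k ∈ B) (j : S) : 0 ≤ w k j := by
  refine nonneg_of_harmonic r hr hirr B ⟨k, hk⟩ (w k) (hw k hk).2 (fun i hi => ?_) j
  rw [(hw k hk).1 i hi]; split_ifs <;> norm_num

lemma harmonicExt_sum (r : S → S → ℝ) (hr : ∀ j k, 0 ≤ r j k)
    (hirr : IrreducibleRates r) (B : Finset S) (hBne : B.Nonempty) (w : S → S → ℝ)
    (hw : HarmonicExt r B w) (j : S) : ∑ k ∈ B, w k j = 1 := by
  have hon : ∀ i ∈ B, ∑ k ∈ B, w k i = 1 := by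
    intro i hi
    rw [Finset.sum_congr rfl fun k hk => (hw k hk).1 i hi]
    simp [hi]
  have hoff : ∀ i ∉ B, gen r (fun j => ∑ k ∈ B, w k j - 1) i = 0 := by
    intro i hi
    have : gen r (fun j => ∑ k ∈ B, w k j - 1) i = ∑ k ∈ B, gen r (w k) i := by
      simp only [gen]
      rw [Finset.sum_comm]
      refine Finset.sum_congr rfl fun l _ => ?_
      rw [← Finset.mul_sum, Finset.sum_sub_distrib]; ring
    rw [this]
    exact Finset.sum_eq_zero fun k hk => (hw k hk).2 i hi
  have h1 := nonneg_of_harmonic r hr hirr B hBne _ hoff (fun i hi => by simp [hon i hi]) j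
  have h2 := nonneg_of_harmonic r hr hirr B hBne (fun i => -(∑ k ∈ B, w k i - 1))
    (fun i hi => by rw [gen_neg, hoff i hi, neg_zero]) (fun i hi => by simp [hon i hi]) j
  linarith

lemma traceR_eq_gen (r : S → S → ℝ) (B : Finset S) (w : S → S → ℝ)
    (hw : HarmonicExt r B w) (j k : S) (hj : j ∈ B) (hk : k ∈ B) (hjk : j ≠ k) :
    traceR r w j k = gen r (w k) j := by
  simp [traceR, gen, hjk, (hw k hk).1 j hj]

lemma traceR_nonneg (r : S → S → ℝ) (hr : ∀ j k, 0 ≤ r j k)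
    (hirr : IrreducibleRates r) (B : Finset S) (w : S → S → ℝ)
    (hw : HarmonicExt r B w) (j k : S) (hk : k ∈ B) : 0 ≤ traceR r w j k := by
  unfold traceR
  split_ifs
  · exact le_rfl
  · exact Finset.sum_nonneg fun l _ =>
      mul_nonneg (hr j l) (harmonicExt_nonneg r hr hirr B w hw k hk l)

/-- The total trace jump rate out of `j`: the diagonal entry of the trace generator. -/
lemma traceR_sum (r : S → S → ℝ) (hr : ∀ j k, 0 ≤ r j k)
    (hirr : IrreducibleRates r) (B : Finset S) (w : S → S → ℝ)
    (hw : HarmonicExt r B w) (j : S) (hj : j ∈ B) :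
    ∑ k ∈ B, traceR r w j k = - gen r (w j) j := by
  have h0 : ∑ k ∈ B, gen r (w k) j = 0 := by
    simp only [gen]
    rw [Finset.sum_comm]
    refine Finset.sum_eq_zero fun l _ => ?_
    rw [← Finset.mul_sum, Finset.sum_sub_distrib, harmonicExt_sum r hr hirr B ⟨j, hj⟩ w hw,
      harmonicExt_sum r hr hirr B ⟨j, hj⟩ w hw]
    ring
  rw [← Finset.add_sum_erase _ _ hj] at h0 ⊢
  rw [Finset.sum_congr rfl fun k hk => traceR_eq_gen r B w hw j k hj (Finset.mem_of_mem_erase hk)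
    (Finset.ne_of_mem_erase hk).symm]
  have : traceR r w j j = 0 := by simp [traceR]
  linarith

/-- `m` is invariant for the trace chain. -/
lemma traceR_inv (r : S → S → ℝ) (hr : ∀ j k, 0 ≤ r j k)
    (hirr : IrreducibleRates r) (B : Finset S) (w : S → S → ℝ)
    (hw : HarmonicExt r B w) (m : S → ℝ) (hinv : ∀ f : S → ℝ, ∑ j, m j * gen r f j = 0)
    (k : S) (hk : k ∈ B) :
    ∑ j ∈ B, m j * traceR r w j k = m k * ∑ l ∈ B, traceR r w k l := by
  have h := hinv (w k)
  rw [← Finset.sum_subset (Finset.subset_univ B) fun j _ hj => by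
    rw [(hw k hk).2 j hj, mul_zero], ← Finset.add_sum_erase _ _ hk] at h
  rw [traceR_sum r hr hirr B w hw k hk, ← Finset.add_sum_erase _ _ hk,
    Finset.sum_congr rfl fun j hj => by
      rw [traceR_eq_gen r B w hw j k (Finset.mem_of_mem_erase hj) hk (Finset.ne_of_mem_erase hj)]]
  have : traceR r w k k = 0 := by simp [traceR]
  rw [this]
  linarith

lemma traceR_sum_pos (r : S → S → ℝ) (hr : ∀ j k, 0 ≤ r j k)
    (hirr : IrreducibleRates r) (B : Finset S) (hB2 : 2 ≤ B.card) (w : S → S → ℝ)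
    (hw : HarmonicExt r B w) (j : S) (hj : j ∈ B) :
    0 < ∑ k ∈ B, traceR r w j k := by
  have h0 : 0 ≤ ∑ k ∈ B, traceR r w j k :=
    Finset.sum_nonneg fun k hk => traceR_nonneg r hr hirr B w hw j k hk
  refine h0.lt_of_ne fun hzero => ?_
  rw [traceR_sum r hr hirr B w hw j hj] at hzero
  obtain ⟨k, hk, hkj⟩ := Finset.exists_mem_ne (by omega : 1 < B.card) j
  have hwj : w j j = 1 := by rw [(hw j hj).1 j hj, if_pos rfl]
  have hwk : w j k = 0 := by rw [(hw j hj).1 k hk, if_neg hkj]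
  have hle : ∀ i, w j i ≤ 1 := fun i => by
    rw [← harmonicExt_sum r hr hirr B ⟨j, hj⟩ w hw i]
    exact Finset.single_le_sum (f := fun k => w k i)
      (fun l hl => harmonicExt_nonneg r hr hirr B w hw l hl i) hj
  have step : ∀ x y, w j x = 1 → 0 < r x y → w j y = 1 := by
    intro x y hx hxy
    have hgen : gen r (w j) x = 0 := by
      by_cases hxB : x ∈ B
      · have : x = j := by
          by_contra hne
          rw [(hw j hj).1 x hxB, if_neg hne] at hx
          norm_num at hx
        rw [this]; linarith
      · exact (hw j hj).2 x hxB
    have := eq_of_harmonic r hr (fun i => - w j i) x y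
      (fun i => by simp only [hx]; linarith [hle i]) (by rw [gen_neg, hgen, neg_zero]) hxy
    simp only [hx] at this
    linarith
  have key : ∀ c, Relation.TransGen (fun a c => 0 < r a c) j c → w j c = 1 := by
    intro c hc
    induction hc with
    | single h => exact step _ _ hwj h
    | tail _ h ih => exact step _ _ ih h
  have := key k (hirr j k hkj.symm)
  linarith

/-! ### The operator on power sums -/

/-- The function `x ↦ ∑ j, x j ^ (q + 1)`, strictly subharmonic for `𝔏_B` when `q > b`. -/
def powSum (q : ℝ) (B : Finset S) (x : ↥B → ℝ) : ℝ := ∑ j, x j ^ (q + 1)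

lemma contDiff_powSum (q : ℝ) (hq : 1 < q) (B : Finset S) : ContDiff ℝ 2 (powSum q B) := by
  refine ContDiff.sum fun j _ => ?_
  have h : ContDiff ℝ 2 fun x : ℝ => x ^ (q + 1) := by
    have := Real.contDiff_rpow_const_of_le (p := q + 1) (n := 2) (by norm_num; linarith)
    exact_mod_cast this
  exact h.comp (contDiff_apply ℝ ℝ j)

lemma fderiv_sum_rpow (p : ℝ) (hp : 1 ≤ p) (B : Finset S) (a : ↥B → ℝ) (x v : ↥B → ℝ) :
    fderiv ℝ (fun y : ↥B → ℝ => ∑ j, a j * y j ^ p) x v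
      = ∑ j, a j * (p * x j ^ (p - 1) * v j) := by
  have h : HasFDerivAt (fun y : ↥B → ℝ => ∑ j, a j * y j ^ p)
      (∑ j, a j • ((p * x j ^ (p - 1)) • ContinuousLinearMap.proj (R := ℝ) (φ := fun _ : ↥B => ℝ) j)) x := by
    refine HasFDerivAt.fun_sum fun j _ => ?_
    refine HasFDerivAt.const_mul ?_ (a j)
    have h1 : HasFDerivAt (fun y : ↥B → ℝ => y j)
        (ContinuousLinearMap.proj (R := ℝ) (φ := fun _ : ↥B => ℝ) j) x := hasFDerivAt_apply j x
    exact (Real.hasDerivAt_rpow_const (x := x j) (Or.inr hp)).comp_hasFDerivAt x h1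
  rw [h.fderiv]
  simp

lemma fderiv_powSum (q : ℝ) (hq : 1 < q) (B : Finset S) (x v : ↥B → ℝ) :
    fderiv ℝ (powSum q B) x v = ∑ j, (q + 1) * v j * x j ^ q := by
  have : powSum q B = fun y : ↥B → ℝ => ∑ j, 1 * y j ^ (q + 1) := by
    funext y; simp [powSum]
  rw [this, fderiv_sum_rpow _ (by linarith)]
  refine Finset.sum_congr rfl fun j _ => ?_
  rw [add_sub_cancel_right]; ring

lemma fderiv2_powSum (q : ℝ) (hq : 1 < q) (B : Finset S) (x v : ↥B → ℝ) :
    fderiv ℝ (fun y => fderiv ℝ (powSum q B) y v) x v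
      = ∑ j, (q + 1) * q * x j ^ (q - 1) * v j ^ 2 := by
  have : (fun y => fderiv ℝ (powSum q B) y v) = fun y : ↥B → ℝ => ∑ j, (q + 1) * v j * y j ^ q := by
    funext y; exact fderiv_powSum q hq B y v
  rw [this, fderiv_sum_rpow _ hq.le]
  exact Finset.sum_congr rfl fun j _ => by ring

lemma fderiv_vvecB (q : ℝ) (hq : 1 < q) (B : Finset S) (rB : S → S → ℝ) (x : ↥B → ℝ) (j : ↥B) :
    fderiv ℝ (powSum q B) x (vvecB rB B j)
      = ∑ k : ↥B, rB j.1 k.1 * ((q + 1) * (x k ^ q - x j ^ q)) := by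
  have hs : ∀ i : ↥B, fderiv ℝ (powSum q B) x (Pi.single i 1) = (q + 1) * x i ^ q := by
    intro i
    rw [fderiv_powSum q hq]
    simp [Pi.single_apply]
  unfold vvecB
  rw [map_sum]
  refine Finset.sum_congr rfl fun k _ => ?_
  rw [map_smul, map_sub, hs, hs, smul_eq_mul]; ring

lemma fderiv2_diff (q : ℝ) (hq : 1 < q) (B : Finset S) (x : ↥B → ℝ) (j k : ↥B) (hjk : j ≠ k) :
    fderiv ℝ (fun y => fderiv ℝ (powSum q B) y ((Pi.single k 1 : ↥B → ℝ) - Pi.single j 1)) x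
          ((Pi.single k 1 : ↥B → ℝ) - Pi.single j 1)
      = (q + 1) * q * (x k ^ (q - 1) + x j ^ (q - 1)) := by
  rw [fderiv2_powSum q hq]
  have : ∀ i : ↥B, (q + 1) * q * x i ^ (q - 1) *
        (((Pi.single k 1 : ↥B → ℝ) - (Pi.single j 1 : ↥B → ℝ) : ↥B → ℝ) i) ^ 2
      = (if i = k then (q + 1) * q * x i ^ (q - 1) else 0)
        + (if i = j then (q + 1) * q * x i ^ (q - 1) else 0) := by
    intro i
    simp only [Pi.sub_apply, Pi.single_apply]
    by_cases h1 : i = k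
    · have h2 : i ≠ j := fun h => hjk (h.symm.trans h1)
      simp [h1, hjk.symm]
    · by_cases h2 : i = j <;> simp [h1, h2, hjk]
  rw [Finset.sum_congr rfl fun i _ => this i, Finset.sum_add_distrib]
  simp
  ring

/-- Only the outgoing mass contributes negatively to the drift, and the invariance of `m` turns the
diffusion part into `(q + 1) q ∑ m_j λ_j x_j ^ (q - 1)`, with `λ_j` the total rate out of `j`. -/
lemma lopB_powSum_ge (q b : ℝ) (hq : 1 < q) (hb : 0 ≤ b) (B : Finset S) (rB : S → S → ℝ)
    (m : S → ℝ) (hm : ∀ j, 0 < m j) (hrB : ∀ j ∈ B, ∀ k ∈ B, 0 ≤ rB j k)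
    (hdiag : ∀ j, rB j j = 0)
    (hinv : ∀ k ∈ B, ∑ j ∈ B, m j * rB j k = m k * ∑ l ∈ B, rB k l)
    (x : ↥B → ℝ) (hx : ∀ j, 0 < x j) :
    (q + 1) * (q - b) * ∑ j : ↥B, (m j.1 * ∑ k ∈ B, rB j.1 k) * x j ^ (q - 1)
      ≤ LopB rB m b B (powSum q B) x := by
  have hsumB : ∀ f : S → ℝ, ∑ k ∈ B, f k = ∑ k : ↥B, f k.1 := fun f =>
    (Finset.sum_coe_sort B f).symm
  have h1 : -((q + 1) * ∑ j : ↥B, (m j.1 * ∑ k ∈ B, rB j.1 k) * x j ^ (q - 1))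
      ≤ ∑ j : ↥B, (if 0 < x j then (m j.1 / x j) *
        fderiv ℝ (powSum q B) x (vvecB rB B j) else 0) := by
    rw [Finset.mul_sum, ← Finset.sum_neg_distrib]
    refine Finset.sum_le_sum fun j _ => ?_
    rw [if_pos (hx j), fderiv_vvecB q hq, hsumB, Finset.mul_sum, Finset.sum_mul, Finset.mul_sum,
      ← Finset.sum_neg_distrib, Finset.mul_sum]
    refine Finset.sum_le_sum fun k _ => ?_
    have hxq : x j ^ q = x j ^ (q - 1) * x j := by
      rw [← Real.rpow_add_one (hx j).ne']; simp
    have hk : 0 ≤ m j.1 / x j * (rB j.1 k.1 * ((q + 1) * x k ^ q)) := by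
      have := hrB j.1 j.2 k.1 k.2
      have := (hm j.1).le
      have := (hx j).le
      have := Real.rpow_nonneg (hx k).le q
      have : 0 ≤ q + 1 := by linarith
      positivity
    have heq : m j.1 / x j * (rB j.1 k.1 * ((q + 1) * (x k ^ q - x j ^ q)))
        = m j.1 / x j * (rB j.1 k.1 * ((q + 1) * x k ^ q))
          - (q + 1) * (m j.1 * rB j.1 k.1 * x j ^ (q - 1)) := by
      rw [hxq]; field_simp [(hx j).ne']; try ring
    rw [heq]; linarith
  have h2 : (1 / 2) * ∑ j : ↥B, ∑ k : ↥B, m j.1 * rB j.1 k.1 *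
        fderiv ℝ (fun y => fderiv ℝ (powSum q B) y ((Pi.single k 1 : ↥B → ℝ) - Pi.single j 1)) x
          ((Pi.single k 1 : ↥B → ℝ) - Pi.single j 1)
      = (q + 1) * q * ∑ j : ↥B, (m j.1 * ∑ k ∈ B, rB j.1 k) * x j ^ (q - 1) := by
    have hterm : ∀ j k : ↥B, m j.1 * rB j.1 k.1 *
        fderiv ℝ (fun y => fderiv ℝ (powSum q B) y ((Pi.single k 1 : ↥B → ℝ) - Pi.single j 1)) x
          ((Pi.single k 1 : ↥B → ℝ) - Pi.single j 1)
        = (q + 1) * q * (m j.1 * rB j.1 k.1 * x k ^ (q - 1))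
          + (q + 1) * q * (m j.1 * rB j.1 k.1 * x j ^ (q - 1)) := by
      intro j k
      by_cases hjk : j = k
      · subst hjk; rw [hdiag]; simp
      · rw [fderiv2_diff q hq B x j k hjk]; ring
    simp only [hterm, Finset.sum_add_distrib, ← Finset.mul_sum]
    have hA : ∑ j : ↥B, ∑ k : ↥B, m j.1 * rB j.1 k.1 * x k ^ (q - 1)
        = ∑ j : ↥B, (m j.1 * ∑ k ∈ B, rB j.1 k) * x j ^ (q - 1) := by
      rw [Finset.sum_comm]
      refine Finset.sum_congr rfl fun k _ => ?_
      rw [← Finset.sum_mul, ← hinv k.1 k.2, hsumB]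
    have hB' : ∑ j : ↥B, ∑ k : ↥B, m j.1 * rB j.1 k.1 * x j ^ (q - 1)
        = ∑ j : ↥B, (m j.1 * ∑ k ∈ B, rB j.1 k) * x j ^ (q - 1) := by
      refine Finset.sum_congr rfl fun j _ => ?_
      rw [← Finset.sum_mul, hsumB, Finset.mul_sum]
    rw [hA, hB']; ring
  unfold LopB
  rw [h2]
  have := mul_le_mul_of_nonneg_left h1 hb
  linarith

/-- On the simplex some coordinate is at least `1 / |B|`, which bounds the power sum from below. -/
lemma weighted_sum_ge (q d : ℝ) (hq : 1 < q) (hd : 0 ≤ d) (B : Finset S) (hBne : B.Nonempty)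
    (a : S → ℝ) (ha : ∀ j ∈ B, d ≤ a j) (x : ↥B → ℝ) (hx : ∀ j, 0 ≤ x j) (hsum : ∑ j, x j = 1) :
    d / (B.card : ℝ) ^ (max (q - 1) 1) ≤ ∑ j : ↥B, a j.1 * x j ^ (q - 1) := by
  have hcard : (1 : ℝ) ≤ B.card := by exact_mod_cast hBne.card_pos
  have hc0 : (0 : ℝ) < B.card := by linarith
  obtain ⟨j, hj⟩ : ∃ j : ↥B, 1 / (B.card : ℝ) ≤ x j := by
    by_contra! h
    have : ∑ j : ↥B, x j < ∑ _j : ↥B, 1 / (B.card : ℝ) :=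
      Finset.sum_lt_sum_of_nonempty ⟨⟨_, hBne.choose_spec⟩, Finset.mem_univ _⟩ fun j _ => h j
    rw [hsum, Finset.sum_const, Finset.card_univ, Fintype.card_coe, nsmul_eq_mul,
      mul_one_div_cancel hc0.ne'] at this
    exact lt_irrefl _ this
  have h1 : 1 / (B.card : ℝ) ^ (max (q - 1) 1) ≤ x j ^ (q - 1) := by
    calc 1 / (B.card : ℝ) ^ (max (q - 1) 1) ≤ 1 / (B.card : ℝ) ^ (q - 1) := by
          have := Real.rpow_le_rpow_of_exponent_le hcard (le_max_left (q - 1) 1)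
          have := Real.rpow_pos_of_pos hc0 (q - 1)
          gcongr
      _ = (1 / (B.card : ℝ)) ^ (q - 1) := by
          rw [Real.div_rpow zero_le_one hc0.le, Real.one_rpow]
      _ ≤ x j ^ (q - 1) := Real.rpow_le_rpow (by positivity) hj (by linarith)
  calc d / (B.card : ℝ) ^ (max (q - 1) 1) = d * (1 / (B.card : ℝ) ^ (max (q - 1) 1)) := by ring
    _ ≤ a j.1 * x j ^ (q - 1) :=
        mul_le_mul (ha j.1 j.2) h1 (by positivity) (hd.trans (ha j.1 j.2))
    _ ≤ _ := Finset.single_le_sum (f := fun j : ↥B => a j.1 * x j ^ (q - 1))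
        (fun i _ => mul_nonneg (hd.trans (ha i.1 i.2)) (Real.rpow_nonneg (hx i) _))
        (Finset.mem_univ j)

lemma powSum_le_one (q : ℝ) (hq : 1 < q) (B : Finset S) (x : ↥B → ℝ) (hx : x ∈ stdSimplex ℝ ↥B) :
    powSum q B x ≤ 1 := by
  rw [← hx.2]
  refine Finset.sum_le_sum fun j _ => ?_
  have h1 : x j ≤ 1 := by
    rw [← hx.2]; exact Finset.single_le_sum (fun i _ => hx.1 i) (Finset.mem_univ j)
  have := Real.rpow_le_rpow_of_exponent_ge' (hx.1 j) h1 zero_le_one (by linarith : 1 ≤ q + 1)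
  simpa using this

lemma lopB_congr (rB : S → S → ℝ) (m : S → ℝ) (b : ℝ) (B : Finset S) (g h : (↥B → ℝ) → ℝ)
    (x : ↥B → ℝ) (hgh : g =ᶠ[𝓝 x] h) : LopB rB m b B g x = LopB rB m b B h x := by
  have h1 : fderiv ℝ g =ᶠ[𝓝 x] fderiv ℝ h := hgh.fderiv
  have h2 : ∀ v, fderiv ℝ (fun y => fderiv ℝ g y v) x = fderiv ℝ (fun y => fderiv ℝ h y v) x := by
    intro v
    refine Filter.EventuallyEq.fderiv_eq ?_
    filter_upwards [h1] with y hy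
    rw [hy]
  simp only [LopB, h1.eq_of_nhds, h2]

lemma lopB_zero (rB : S → S → ℝ) (m : S → ℝ) (b : ℝ) (B : Finset S) (x : ↥B → ℝ) :
    LopB rB m b B (fun _ => 0) x = 0 := by
  simp [LopB]

lemma continuous_fderiv_apply (B : Finset S) (g : (↥B → ℝ) → ℝ) (hg : ContDiff ℝ 2 g)
    (v : ↥B → ℝ) : Continuous fun x => fderiv ℝ g x v :=
  (hg.continuous_fderiv (by norm_num)).clm_apply continuous_const

lemma continuous_fderiv2_apply (B : Finset S) (g : (↥B → ℝ) → ℝ) (hg : ContDiff ℝ 2 g)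
    (v : ↥B → ℝ) : Continuous fun x => fderiv ℝ (fun y => fderiv ℝ g y v) x v := by
  have h : ContDiff ℝ 1 fun y => fderiv ℝ g y v :=
    (hg.fderiv_right (m := 1) (by norm_num)).clm_apply contDiff_const
  exact (h.continuous_fderiv (by norm_num)).clm_apply continuous_const

lemma measurable_lopB (rB : S → S → ℝ) (m : S → ℝ) (b : ℝ) (B : Finset S) (g : (↥B → ℝ) → ℝ)
    (hg : ContDiff ℝ 2 g) : Measurable (LopB rB m b B g) := by
  unfold LopB
  refine Measurable.add (Measurable.const_mul (Finset.measurable_sum _ fun j _ => ?_) _)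
    (Measurable.const_mul (Finset.measurable_sum _ fun j _ => Finset.measurable_sum _ fun k _ => ?_) _)
  · refine Measurable.ite (measurableSet_lt measurable_const (measurable_pi_apply j)) ?_
      measurable_const
    exact (measurable_const.div (measurable_pi_apply j)).mul
      (continuous_fderiv_apply B g hg _).measurable
  · exact (continuous_fderiv2_apply B g hg _).measurable.const_mul _

/-- The singular coefficients `1 / x_j` are harmless for a function vanishing near the boundary. -/
lemma lopB_bounded (rB : S → S → ℝ) (m : S → ℝ) (b : ℝ) (B : Finset S) (g : (↥B → ℝ) → ℝ)
    (hg : ContDiff ℝ 2 g) (ε : ℝ) (hε : 0 < ε) (hgz : ∀ x j, x j < ε → g x = 0) :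
    ∃ C, 0 ≤ C ∧ ∀ x ∈ stdSimplex ℝ ↥B, |LopB rB m b B g x| ≤ C := by
  have hcpt : IsCompact (stdSimplex ℝ ↥B) := isCompact_stdSimplex ℝ ↥B
  -- `1 / x_j` may be replaced by the continuous function `1 / max ε x_j`
  have hrepl : ∀ x, ∀ j : ↥B, (if 0 < x j then (m j.1 / x j) * fderiv ℝ g x (vvecB rB B j) else 0)
      = (m j.1 / max ε (x j)) * fderiv ℝ g x (vvecB rB B j) := by
    intro x j
    by_cases h : x j < ε
    · have h0 : g =ᶠ[𝓝 x] fun _ => 0 := by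
        filter_upwards [(isOpen_lt (continuous_apply j) continuous_const).mem_nhds h] with y hy
        exact hgz y j hy
      have : fderiv ℝ g x = 0 := by rw [h0.fderiv_eq]; simp
      simp [this]
    · rw [not_lt] at h
      rw [if_pos (hε.trans_le h), max_eq_right h]
  have hcont : Continuous fun x => LopB rB m b B g x := by
    simp only [LopB, hrepl]
    refine Continuous.add (continuous_const.mul (continuous_finsetSum _ fun j _ => ?_))
      (continuous_const.mul (continuous_finsetSum _ fun j _ => continuous_finsetSum _ fun k _ => ?_))
    · refine (continuous_const.div (continuous_const.max (continuous_apply j)) fun x => ?_).mul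
        (continuous_fderiv_apply B g hg _)
      exact (hε.trans_le (le_max_left _ _)).ne'
    · exact continuous_const.mul (continuous_fderiv2_apply B g hg _)
  obtain ⟨C, hC⟩ := hcpt.exists_bound_of_continuousOn hcont.continuousOn
  exact ⟨max C 0, le_max_right _ _, fun x hx => (hC x hx).trans (le_max_left _ _)⟩

/-! ### Localized test functions -/

/-- A smooth cutoff on the line, equal to `0` on `s ≤ ε / 4` and to `1` on `s ≥ ε / 2`. -/
def cutoff (ε s : ℝ) : ℝ := Real.smoothTransition (4 * s / ε - 1)

/-- The family of `C²` representatives: `powSum` cut off near the boundary on the face `B`, and `0`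
on every other face. -/
def testG (q ε : ℝ) (B B' : Finset S) (x : ↥B' → ℝ) : ℝ :=
  if B' = B then powSum q B' x * ∏ j, cutoff ε (x j) else 0

/-- The element of `D₀(Σ)` represented by `testG`. -/
def testF (q ε : ℝ) (B : Finset S) (y : S → ℝ) : ℝ :=
  if Bpos y = B then testG q ε B B (restB B y) else 0

lemma cutoff_nonneg (ε s : ℝ) : 0 ≤ cutoff ε s := Real.smoothTransition.nonneg _

lemma cutoff_le_one (ε s : ℝ) : cutoff ε s ≤ 1 := Real.smoothTransition.le_one _

lemma cutoff_zero (ε s : ℝ) (hε : 0 < ε) (hs : s < ε / 4) : cutoff ε s = 0 := by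
  refine Real.smoothTransition.zero_of_nonpos ?_
  rw [sub_nonpos, div_le_one hε]; linarith

lemma cutoff_one (ε s : ℝ) (hε : 0 < ε) (hs : ε / 2 < s) : cutoff ε s = 1 := by
  refine Real.smoothTransition.one_of_one_le ?_
  rw [le_sub_iff_add_le, le_div_iff₀ hε]; linarith

lemma testG_zero (q ε : ℝ) (hε : 0 < ε) (B B' : Finset S) (x : ↥B' → ℝ) (j : ↥B')
    (hj : x j < ε / 4) : testG q ε B B' x = 0 := by
  unfold testG
  rw [Finset.prod_eq_zero (Finset.mem_univ j) (cutoff_zero ε (x j) hε hj)]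
  simp

lemma contDiff_testG (q ε : ℝ) (hq : 1 < q) (B B' : Finset S) :
    ContDiff ℝ 2 (testG q ε B B') := by
  unfold testG
  by_cases h : B' = B
  · simp only [if_pos h]
    refine (contDiff_powSum q hq B').mul (contDiff_prod fun j _ => ?_)
    refine Real.smoothTransition.contDiff.comp ?_
    have : ContDiff ℝ 2 fun x : ↥B' → ℝ => x j := contDiff_apply ℝ ℝ j
    exact ((contDiff_const.mul this).div_const ε).sub contDiff_const
  · simp only [if_neg h]
    exact contDiff_const

lemma testG_eventuallyEq (q ε : ℝ) (hε : 0 < ε) (B : Finset S) (x : ↥B → ℝ)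
    (hx : ∀ j, ε ≤ x j) : testG q ε B B =ᶠ[𝓝 x] powSum q B := by
  have h : ∀ᶠ y : ↥B → ℝ in 𝓝 x, ∀ j, ε / 2 < y j := by
    rw [eventually_all]
    intro j
    exact (isOpen_lt continuous_const (continuous_apply j)).mem_nhds
      (show ε / 2 < x j by linarith [hx j])
  filter_upwards [h] with y hy
  simp [testG, cutoff_one ε _ hε (hy _)]

lemma testG_mem_Icc (q ε : ℝ) (hq : 1 < q) (B B' : Finset S) (x : ↥B' → ℝ)
    (hx : x ∈ stdSimplex ℝ ↥B') : 0 ≤ testG q ε B B' x ∧ testG q ε B B' x ≤ 1 := by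
  have h0 : 0 ≤ powSum q B' x := Finset.sum_nonneg fun j _ => Real.rpow_nonneg (hx.1 j) _
  have hp0 : 0 ≤ ∏ j, cutoff ε (x j) := Finset.prod_nonneg fun j _ => cutoff_nonneg ε _
  have hp1 : ∏ j, cutoff ε (x j) ≤ 1 :=
    Finset.prod_le_one (fun j _ => cutoff_nonneg ε _) fun j _ => cutoff_le_one ε _
  unfold testG
  split_ifs
  · exact ⟨mul_nonneg h0 hp0, mul_le_one₀ (powSum_le_one q hq B' x hx) hp0 hp1⟩
  · exact ⟨le_rfl, zero_le_one⟩

lemma mem_Bpos (y : S → ℝ) (j : S) : j ∈ Bpos y ↔ 0 < y j := by simp [Bpos]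

/-- Restricting a point of `Σ` that vanishes off `B` gives a point of `Σ_B`. -/
lemma restB_mem (B : Finset S) (y : S → ℝ) (hy : y ∈ stdSimplex ℝ S) (h0 : ∀ j ∉ B, y j = 0) :
    restB B y ∈ stdSimplex ℝ ↥B := by
  refine ⟨fun j => hy.1 j.1, ?_⟩
  rw [← hy.2, ← Finset.sum_subset (Finset.subset_univ B) fun j _ hj => h0 j hj]
  exact Finset.sum_coe_sort B y

lemma restB_mem_of_Bpos (B : Finset S) (y : S → ℝ) (hy : y ∈ stdSimplex ℝ S) (h : Bpos y = B) :
    restB B y ∈ stdSimplex ℝ ↥B := by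
  refine restB_mem B y hy fun j hj => ?_
  rw [← h, mem_Bpos, not_lt] at hj
  exact le_antisymm hj (hy.1 j)

lemma testF_mem_Icc (q ε : ℝ) (hq : 1 < q) (B : Finset S) (y : S → ℝ)
    (hy : y ∈ stdSimplex ℝ S) : 0 ≤ testF q ε B y ∧ testF q ε B y ≤ 1 := by
  unfold testF
  split_ifs with h
  · exact testG_mem_Icc q ε hq B B _ (restB_mem_of_Bpos B y hy h)
  · exact ⟨le_rfl, zero_le_one⟩

lemma repD0_test (q ε : ℝ) (hq : 1 < q) (hε : 0 < ε) (B : Finset S) :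
    RepD0 (testF q ε B) (testG q ε B) := by
  intro B' _
  have hFB : ∀ x : ↥B' → ℝ, FB B' (testF q ε B) x = if ∀ j, 0 < x j then testG q ε B B' x else 0 := by
    intro x
    unfold FB
    by_cases hx : ∀ j, 0 < x j
    · rw [if_pos hx, if_pos hx]
      have hpos : Bpos (inclB B' x) = B' := by
        ext j
        rw [mem_Bpos]
        by_cases hj : j ∈ B' <;> simp [inclB, hj, hx]
      unfold testF
      rw [hpos]
      by_cases hB : B' = B
      · subst hB
        rw [if_pos rfl]
        congr 1
        funext j
        simp [restB, inclB]
      · rw [if_neg hB, testG, if_neg hB]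
    · rw [if_neg hx, if_neg hx]
  refine ⟨contDiff_testG q ε hq B B', fun x hx => ?_, ε / 4, by positivity, fun x _ hj => ?_⟩
  · rw [hFB]
    split_ifs with h
    · rfl
    · push Not at h
      obtain ⟨j, hj⟩ := h
      exact testG_zero q ε hε B B' x j (by linarith)
  · obtain ⟨j, hj⟩ := hj
    rw [hFB, testG_zero q ε hε B B' x j hj, ite_self]

lemma lcal_test (r : S → S → ℝ) (m : S → ℝ) (b q ε : ℝ) (u : Finset S → S → S → ℝ) (B : Finset S)
    (hB2 : 2 ≤ B.card) (y : S → ℝ) :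
    Lcal r m b u (testG q ε B) y
      = if Bpos y = B then LopB (traceR r (u B)) m b B (testG q ε B B) (restB B y) else 0 := by
  unfold Lcal
  by_cases h : Bpos y = B
  · rw [if_pos h, h, if_pos hB2]
  · rw [if_neg h]
    have h0 : testG q ε B (Bpos y) = fun _ => 0 := by
      funext x; rw [testG, if_neg h]
    rw [h0, lopB_zero, ite_self]

lemma measurable_lcal_test (r : S → S → ℝ) (m : S → ℝ) (b q ε : ℝ) (hq : 1 < q)
    (u : Finset S → S → S → ℝ) (B : Finset S) (hB2 : 2 ≤ B.card) :
    Measurable (Lcal r m b u (testG q ε B)) := by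
  rw [show Lcal r m b u (testG q ε B) = _ from funext (lcal_test r m b q ε u B hB2)]
  refine Measurable.ite ?_ ?_ measurable_const
  · have : {y : S → ℝ | Bpos y = B} = ⋂ j : S, {y | 0 < y j ↔ j ∈ B} := by
      ext y; simp [Finset.ext_iff, mem_Bpos]
    rw [this]
    refine MeasurableSet.iInter fun j => ?_
    by_cases hj : j ∈ B
    · simpa [hj] using measurableSet_lt measurable_const (measurable_pi_apply j)
    · simpa [hj] using measurableSet_le (measurable_pi_apply j) measurable_const
  · exact (measurable_lopB _ m b B _ (contDiff_testG q ε hq B B)).comp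
      (measurable_pi_lambda _ fun j => measurable_pi_apply j.1)

lemma jumpSum_mono (F : (S → ℝ) → ℝ) (hF : ∀ y ∈ stdSimplex ℝ S, 0 ≤ F y) (ω : PathSp S) (s t : ℝ≥0)
    (hst : s ≤ t) : jumpSum F s ω ≤ jumpSum F t ω := by
  refine Finset.sum_le_sum fun n _ => ?_
  have h0 := hF _ (ω (sigmaT n ω).toNNReal).2
  by_cases h : sigmaT n ω ≤ (s : ℝ≥0∞)
  · rw [if_pos h, if_pos (h.trans (by exact_mod_cast hst))]
  · rw [if_neg h]
    split_ifs
    exacts [h0, le_rfl]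

lemma martProcL_sub_le (r : S → S → ℝ) (m : S → ℝ) (b : ℝ) (u : Finset S → S → S → ℝ)
    (g : (B : Finset S) → (↥B → ℝ) → ℝ) (F : (S → ℝ) → ℝ)
    (hF : ∀ y ∈ stdSimplex ℝ S, 0 ≤ F y ∧ F y ≤ 1) (ω : PathSp S) (s : ℝ≥0) :
    martProcL r m b u g F s ω - martProcL r m b u g F 0 ω
      ≤ 1 - ∫ x in Icc (0 : ℝ) s, Lcal r m b u g (ω x.toNNReal : S → ℝ) := by
  unfold martProcL
  have h1 := jumpSum_mono F (fun y hy => (hF y hy).1) ω 0 s bot_le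
  have h2 : F (ω s : S → ℝ) ≤ 1 := (hF _ (ω s).2).2
  have h3 : 0 ≤ F (ω 0 : S → ℝ) := (hF _ (ω 0).2).1
  have h4 : ∫ x in Icc (0 : ℝ) ((0 : ℝ≥0) : ℝ), Lcal r m b u g (ω x.toNNReal : S → ℝ) = 0 := by
    simp
  rw [h4]
  linarith

/-! ### Path properties -/

lemma sigmaT_one (B : Finset S) (ω : PathSp S) (h : Bpos (ω 0 : S → ℝ) = B) :
    sigmaT 1 ω = hitB B ω := by
  have hshift : shiftPath 0 ω = ω := by
    ext s; simp [shiftPath]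
  have h' : (sigB 0 ω).2 = B := h
  have h'' : (sigB 0 ω).1 = 0 := rfl
  have h1 : (sigB 0 ω).1 < ⊤ := by rw [h'']; exact ENNReal.zero_lt_top
  have h2 : sigmaT 1 ω
      = (sigB 0 ω).1 + hitB (sigB 0 ω).2 (shiftPath (sigB 0 ω).1.toNNReal ω) :=
    congrArg Prod.fst (if_pos (e := (⊤, (sigB 0 ω).2)) h1)
  rw [h2, h', h'', ENNReal.toNNReal_zero, hshift, zero_add]

/-- By compactness, before the hitting time the coordinates in `B` stay away from `0`. -/
lemma exists_lower_bound (B : Finset S) (ω : PathSp S) (T : ℝ≥0) (hT : (T : ℝ≥0∞) < hitB B ω) :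
    ∃ δ : ℝ, 0 < δ ∧ ∀ s ≤ T, ∀ j ∈ B, δ ≤ (ω s : S → ℝ) j := by
  have hpos : ∀ s ≤ T, ∀ j ∈ B, 0 < (ω s : S → ℝ) j := by
    intro s hs j hj
    refine lt_of_le_of_ne ((ω s).2.1 j) fun h => ?_
    have : hitB B ω ≤ s := sInf_le ⟨s, Finset.prod_eq_zero hj h.symm, rfl⟩
    exact absurd (hT.trans_le this) (not_lt.2 (by exact_mod_cast hs))
  have hmin : ∀ j : S, ∃ δ : ℝ, 0 < δ ∧ (j ∈ B → ∀ s ≤ T, δ ≤ (ω s : S → ℝ) j) := by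
    intro j
    by_cases hj : j ∈ B
    · have hc : Continuous fun s : ℝ≥0 => (ω s : S → ℝ) j :=
        (continuous_apply j).comp (continuous_subtype_val.comp ω.continuous)
      obtain ⟨s₀, hs₀, hle⟩ := (isCompact_Icc (a := (0 : ℝ≥0)) (b := T)).exists_isMinOn
        ⟨0, by simp⟩ hc.continuousOn
      exact ⟨_, hpos s₀ hs₀.2 j hj, fun _ s hs => hle ⟨bot_le, hs⟩⟩
    · exact ⟨1, one_pos, fun h => absurd h hj⟩
  choose δ hδ hδle using hmin
  by_cases hB : B.Nonempty
  · refine ⟨B.inf' hB δ, (Finset.lt_inf'_iff hB).2 fun j _ => hδ j, fun s hs j hj => ?_⟩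
    exact (Finset.inf'_le δ hj).trans (hδle j hj s hs)
  · exact ⟨1, one_pos, fun s _ j hj => absurd ⟨j, hj⟩ hB⟩

lemma ae_start (P : Measure (PathSp S)) [IsProbabilityMeasure P] (z : S → ℝ)
    (hstart : StartsAt P z) : ∀ᵐ ω ∂P, (ω 0 : S → ℝ) = z := by
  have hm : MeasurableSet {ω : PathSp S | (ω 0 : S → ℝ) = z} :=
    (isClosed_eq (continuous_subtype_val.comp (continuous_eval_const (0 : ℝ≥0)))
      continuous_const).measurableSet
  exact (mem_ae_iff_prob_eq_one hm).2 hstart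

/-- The event defining absorption has outer measure one; it is almost surely contained in the closed
event below, so the latter has full measure. -/
lemma ae_face (P : Measure (PathSp S)) [IsProbabilityMeasure P] (z : S → ℝ)
    (hstart : StartsAt P z) (habs : Absorbing P) :
    ∀ᵐ ω ∂P, ∀ t : ℝ≥0, ∀ j ∉ Bpos z, (ω t : S → ℝ) j = 0 := by
  have hm : MeasurableSet {ω : PathSp S | ∀ t : ℝ≥0, ∀ j ∉ Bpos z, (ω t : S → ℝ) j = 0} := by
    simp only [ofPred_forall]
    exact (isClosed_iInter fun t => isClosed_iInter fun j => isClosed_iInter fun _ =>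
      isClosed_eq (continuous_coord t j) continuous_const).measurableSet
  refine (mem_ae_iff_prob_eq_one hm).2 (le_antisymm prob_le_one ?_)
  rw [← habs 0]
  refine measure_mono_ae ?_
  filter_upwards [ae_start P z hstart] with ω hω h t j hj
  refine h t (by simp [sigmaT, sigB]) j ?_
  have : Bn 0 ω = Bpos z := by rw [← hω]; rfl
  rwa [this]

/-! ### The bound on the absorption time -/

/-- bound on the expected absorption time for an absorbing solution of the
ℒ-martingale problem started outside the vertices. -/
theorem statement9
    (S : Type) [Fintype S] [DecidableEq S] (hS : 2 ≤ Fintype.card S)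
    (r : S → S → ℝ) (hr : ∀ j k, 0 ≤ r j k) (hrdiag : ∀ j, r j j = 0)
    (hirr : IrreducibleRates r)
    (m : S → ℝ) (hm : ∀ j, 0 < m j)
    (hinv : ∀ f : S → ℝ, ∑ j, m j * gen r f j = 0)
    (b : ℝ) (hb : 1 < b)
    (u : Finset S → S → S → ℝ)
    (hu : ∀ B : Finset S, 2 ≤ B.card → HarmonicExt r B (u B))
    (z : S → ℝ) (hz : z ∈ stdSimplex ℝ S)
    (hzv : ∀ j : S, z ≠ ebasis j)
    (B : Finset S) (hB : ∀ j, j ∈ B ↔ 0 < z j) (hBne : B.Nonempty)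
    (P : Measure (PathSp S)) (hP : IsProbabilityMeasure P)
    (hstart : StartsAt P z) (habs : Absorbing P) (hsol : SolvesMPL r m b u P)
    (q : ℝ) (hq : b < q) :
    (∫⁻ ω, sigmaT 1 ω ∂P) ≤
      ENNReal.ofReal ((B.card : ℝ) ^ (max (q - 1) 1) /
        ((q + 1) * (q - b) * (B.inf' hBne fun j => m j * ∑ k ∈ B, traceR r (u B) j k)))
      ∧ P {ω : PathSp S | sigmaT 1 ω < ⊤} = 1 := by
  classical
  have hq1 : 1 < q := hb.trans hq
  have hBz : Bpos z = B := by ext j; rw [mem_Bpos, hB]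
  have hB2 : 2 ≤ B.card := by
    by_contra hcon
    obtain ⟨j, hj⟩ := Finset.card_eq_one.1
      (le_antisymm (by omega : B.card ≤ 1) hBne.card_pos)
    have hz0 : ∀ i, i ≠ j → z i = 0 := fun i hi =>
      le_antisymm (not_lt.1 fun h => hi (by simpa [hj] using (hB i).2 h)) (hz.1 i)
    refine hzv j (funext fun i => ?_)
    by_cases hi : i = j
    · have h1 : ∑ i, z i = z j := Fintype.sum_eq_single j hz0
      rw [hi, ← h1, hz.2]; simp [ebasis]
    · rw [hz0 i hi]; simp [ebasis, hi]
  have hw := hu B hB2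
  set d : ℝ := B.inf' hBne fun j => m j * ∑ k ∈ B, traceR r (u B) j k with hd
  have hd0 : 0 < d := (Finset.lt_inf'_iff hBne).2 fun j hj =>
    mul_pos (hm j) (traceR_sum_pos r hr hirr B hB2 (u B) hw j hj)
  have hcard : (0 : ℝ) < (B.card : ℝ) ^ (max (q - 1) 1) :=
    Real.rpow_pos_of_pos (by exact_mod_cast hBne.card_pos) _
  set c : ℝ := (q + 1) * (q - b) * (d / (B.card : ℝ) ^ (max (q - 1) 1)) with hcdef
  have hqb : 0 < (q + 1) * (q - b) := mul_pos (by linarith) (by linarith)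
  have hc0 : 0 < c := by positivity
  have hstartae := ae_start P z hstart
  have hface := ae_face P z hstart habs
  rw [hBz] at hface
  -- for every localization level `ε` and time horizon `t`, the expected exit time is at most `1 / c`
  have hG : ∀ n : ℕ, ∃ G : PathSp S → ℝ≥0∞, Measurable G ∧ ∫⁻ ω, G ω ∂P ≤ 1 ∧
      ∀ᵐ ω ∂P, ∀ T : ℝ, T ≤ ((n + 1 : ℕ) : ℝ≥0) →
        (∀ s ∈ Ico (0 : ℝ) T, (ω s.toNNReal : S → ℝ) ∈
          {y : S → ℝ | ∀ j ∈ B, 1 / ((n : ℝ) + 1) ≤ y j}) → ENNReal.ofReal (c * T) ≤ G ω := by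
    intro n
    have hε : 0 < 1 / ((n : ℝ) + 1) := by positivity
    set ε : ℝ := 1 / ((n : ℝ) + 1) with hεdef
    obtain ⟨C, hC0, hC⟩ := lopB_bounded (traceR r (u B)) m b B (testG q ε B B)
      (contDiff_testG q ε hq1 B B) (ε / 4) (by positivity)
      (fun x j hj => testG_zero q ε hε B B x j hj)
    refine exit_bound P _ (hsol _ _ (repD0_test q ε hq1 hε B))
      (fun ω s => Lcal r m b u (testG q ε B) (ω s.toNNReal : S → ℝ))
      {y : S → ℝ | ∀ j ∈ B, ε ≤ y j} ?_ c C _ (by positivity) hc0.le hC0 ?_ ?_ ?_ ?_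
    · simp only [ofPred_forall]
      exact isClosed_biInter fun j _ => isClosed_le continuous_const (continuous_apply j)
    · intro ω
      exact (measurable_lcal_test r m b q ε hq1 u B hB2).comp
        (continuous_subtype_val.comp (ω.continuous.comp continuous_real_toNNReal)).measurable
    · intro ω s
      simp only [lcal_test r m b q ε u B hB2]
      split_ifs with h
      · exact hC _ (restB_mem_of_Bpos B _ (ω s.toNNReal).2 h)
      · simpa using hC0
    · filter_upwards [hface] with ω hω s hs
      have hpos : Bpos (ω s.toNNReal : S → ℝ) = B := by
        ext j
        rw [mem_Bpos]
        refine ⟨fun h => ?_, fun hj => hε.trans_le (hs j hj)⟩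
        by_contra hj
        exact h.ne' (hω _ j hj)
      have hmem := restB_mem_of_Bpos B _ (ω s.toNNReal).2 hpos
      simp only [lcal_test r m b q ε u B hB2, if_pos hpos]
      have hge : ∀ j : ↥B, ε ≤ restB B (ω s.toNNReal : S → ℝ) j := fun j => hs j.1 j.2
      rw [lopB_congr _ _ _ _ _ _ _ (testG_eventuallyEq q ε hε B _ hge)]
      refine le_trans ?_ (lopB_powSum_ge q b hq1 (by linarith) B (traceR r (u B)) m hm
        (fun j _ k hk => traceR_nonneg r hr hirr B (u B) hw j k hk) (fun j => by simp [traceR])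
        (fun k hk => traceR_inv r hr hirr B (u B) hw m hinv k hk) _
        (fun j => hε.trans_le (hge j)))
      rw [hcdef]
      refine mul_le_mul_of_nonneg_left ?_ hqb.le
      exact weighted_sum_ge q d hq1 hd0.le B hBne
        (fun j => m j * ∑ k ∈ B, traceR r (u B) j k)
        (fun j hj => Finset.inf'_le (fun j => m j * ∑ k ∈ B, traceR r (u B) j k) hj) _ hmem.1 hmem.2
    · exact fun ω s => martProcL_sub_le r m b u _ _ (fun y hy => testF_mem_Icc q ε hq1 B y hy) ω s
  choose G hGm hGint hGlow using hG
  set L : PathSp S → ℝ≥0∞ := fun ω => liminf (fun n => G n ω) atTop with hL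
  have hLm : Measurable L := Measurable.liminf hGm
  have hLint : ∫⁻ ω, L ω ∂P ≤ 1 := by
    refine (lintegral_liminf_le hGm).trans ?_
    exact liminf_le_of_frequently_le' (Frequently.of_forall hGint)
  have hcE0 : ENNReal.ofReal c ≠ 0 := by simpa using hc0
  have hbound : ∀ᵐ ω ∂P, sigmaT 1 ω ≤ (ENNReal.ofReal c)⁻¹ * L ω := by
    filter_upwards [ae_all_iff.2 hGlow, hstartae] with ω hω hω0
    rw [sigmaT_one B ω (by rw [hω0, hBz])]
    refine ENNReal.le_of_forall_nnreal_lt fun T hT => ?_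
    obtain ⟨δ, hδ, hlow⟩ := exists_lower_bound B ω T hT
    have hev : ENNReal.ofReal (c * T) ≤ L ω := by
      refine le_liminf_of_le (by isBoundedDefault) ?_
      have h1 : ∀ᶠ n : ℕ in atTop, 1 / ((n : ℝ) + 1) < δ :=
        tendsto_one_div_add_atTop_nhds_zero_nat.eventually_lt_const hδ
      have h2 : ∀ᶠ n : ℕ in atTop, (T : ℝ) ≤ n := tendsto_natCast_atTop_atTop.eventually_ge_atTop _
      filter_upwards [h1, h2] with n hn1 hn2
      refine hω n T (by push_cast; linarith) fun s hs j hj => hn1.le.trans (hlow _ ?_ j hj)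
      exact Real.toNNReal_le_iff_le_coe.2 hs.2.le
    rw [ENNReal.ofReal_mul hc0.le, ENNReal.ofReal_coe_nnreal] at hev
    calc (T : ℝ≥0∞) = (ENNReal.ofReal c)⁻¹ * (ENNReal.ofReal c * T) := by
          rw [← mul_assoc, ENNReal.inv_mul_cancel hcE0 ENNReal.ofReal_ne_top, one_mul]
      _ ≤ _ := by gcongr
  constructor
  · calc ∫⁻ ω, sigmaT 1 ω ∂P ≤ ∫⁻ ω, (ENNReal.ofReal c)⁻¹ * L ω ∂P := lintegral_mono_ae hbound
      _ = (ENNReal.ofReal c)⁻¹ * ∫⁻ ω, L ω ∂P := lintegral_const_mul _ hLm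
      _ ≤ (ENNReal.ofReal c)⁻¹ * 1 := by gcongr
      _ = _ := by
        rw [mul_one, ← ENNReal.ofReal_inv_of_pos hc0, hcdef]
        congr 1
        field_simp
  · have hLfin : ∀ᵐ ω ∂P, L ω < ⊤ :=
      ae_lt_top hLm (hLint.trans_lt ENNReal.one_lt_top).ne
    have hfin : ∀ᵐ ω ∂P, sigmaT 1 ω < ⊤ := by
      filter_upwards [hbound, hLfin] with ω h1 h2
      exact h1.trans_lt (ENNReal.mul_lt_top (ENNReal.inv_lt_top.2 (by simpa using hc0)) h2)
    rw [← measure_univ (μ := P)]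
    refine measure_congr ?_
    filter_upwards [hfin] with ω h
    exact propext ⟨fun _ => trivial, fun _ => h⟩
end
end

section
/- Fix a proper subset B of S with at least two elements and let A := Bᶜ. For f ∈ C²(Σ_B), the function F := f ∘ Υ ∈ C²(Σ) satisfies: (i) F(x) = f(x_B) for all x ∈ Σ_{B,0}; (ii) v_j · ∇F(x) = 0 for every j ∈ A and every x ∈ Σ, so that F ∈ 𝓓_A; and (iii) (𝔏F)(x) = (𝔏_B f)(x_B) for every x ∈ Σ_{B,0} with x_j > 0 for all j ∈ B. -/
/-!
The map `Υ` is linear and sends `v_j` to the vector with coordinates `(𝓛 u_k)(j)`. This vanishes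
for `j ∉ B`, so `f ∘ Υ` has zero derivative along `v_j` there. For `j ∈ B` it equals `v_j^B`;
the diagonal coordinate requires `∑ k ∈ B, u_k = 1`, which follows from the maximum principle
(`max_principle`, `sum_harmonicExt`). Hence the drift terms of the two operators agree on the face
`Σ_{B,0}`, on which `Υ` is the restriction of coordinates.

For the second-order terms, with `D` the second derivative of `f` and `w_j = Υ(e_j)`, expand
`D (w_k - w_j, w_k - w_j)` as `D (w_k, w_k) - D (w_j, w_j)` minus the cross terms
`D (w_j, w_k - w_j) + D (w_k - w_j, w_j)`. Summing against `m_j r(j,k)`, invariance of `m` removes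
the difference of squares, and the cross terms depend only on the `w_j` and the drifts `Υ(v_j)`
(`energy_identity`). The same identity holds for the trace rates, for which `m` restricted to `B`
is invariant (`trace_invariant`). As the drifts vanish off `B` and coincide on `B`, where
`w_j = e_j`, the two second-order terms are equal (`second_order_eq`).
-/

open MeasureTheory Set
open scoped NNReal ENNReal

noncomputable section

variable {S : Type*} [Fintype S] [DecidableEq S]

/-- the projection Υ : Σ → Σ_B, Υ(x)_k = u_k · x -/
def Upsilon (u : S → S → ℝ) (B : Finset S) (x : S → ℝ) : ↥B → ℝ :=
  fun k => ∑ j, u k.1 j * x j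

/-! ### The projection as a linear map -/

/-- `Upsilon` as a continuous linear map. -/
def upsL (u : S → S → ℝ) (B : Finset S) : (S → ℝ) →L[ℝ] (↥B → ℝ) :=
  LinearMap.toContinuousLinearMap
    { toFun := Upsilon u B
      map_add' := fun x y => by
        funext k; simp [Upsilon, mul_add, Finset.sum_add_distrib]
      map_smul' := fun c x => by
        funext k; simp [Upsilon, Finset.mul_sum, mul_left_comm] }

lemma upsL_apply (u : S → S → ℝ) (B : Finset S) (x : S → ℝ) :
    upsL u B x = Upsilon u B x := rfl

lemma upsL_ebasis (u : S → S → ℝ) (B : Finset S) (j : S) (k : ↥B) :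
    upsL u B (ebasis j) k = u k.1 j := by
  simp [upsL_apply, Upsilon, ebasis, Pi.single_apply]

/-- The coordinates of the image of `v_j` are the generator applied to the `u_k`; this vanishes
off `B` because the `u_k` are harmonic there. -/
lemma upsL_vvec (r u : S → S → ℝ) (B : Finset S) (j : S) (k : ↥B) :
    upsL u B (vvec r j) k = gen r (u k.1) j := by
  simp [vvec, map_sum, gen, upsL_ebasis]

/-! ### Maximum principle and the trace rates -/

/-- Maximum principle: a function vanishing on `B` and harmonic off `B` is nonpositive. -/
lemma max_principle {r : S → S → ℝ} (hr : ∀ j k, 0 ≤ r j k) (hirr : IrreducibleRates r)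
    {B : Finset S} (hB : B.Nonempty) {h : S → ℝ} (h0 : ∀ j ∈ B, h j = 0)
    (hh : ∀ j ∉ B, gen r h j = 0) (i : S) : h i ≤ 0 := by
  obtain ⟨b, hb⟩ := hB
  obtain ⟨j₀, -, hmax⟩ := Finset.exists_max_image Finset.univ h ⟨i, Finset.mem_univ i⟩
  refine (hmax i (Finset.mem_univ i)).trans ?_
  by_cases hj : j₀ = b
  · rw [hj, h0 b hb]
  -- Off `B`, the value at a maximiser is an average of its neighbours, so the maximum propagates
  -- along every positive rate until `B` is reached.
  have step : ∀ a c, 0 < r a c → h a = h j₀ → a ∉ B → h c = h j₀ := by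
    intro a c hac ha haB
    have hz : ∑ k, r a k * (h a - h k) = 0 := by
      have h1 := hh a haB
      simp only [gen] at h1
      rw [← neg_eq_zero, ← Finset.sum_neg_distrib, ← h1]
      exact Finset.sum_congr rfl fun k _ => by ring
    have h2 := (Finset.sum_eq_zero_iff_of_nonneg (fun k _ => mul_nonneg (hr a k)
      (by have := hmax k (Finset.mem_univ k); linarith))).1 hz c (Finset.mem_univ c)
    rcases mul_eq_zero.1 h2 with h3 | h3 <;> linarith
  have key : ∀ a, Relation.TransGen (fun a c => 0 < r a c) a b → h a = h j₀ → h j₀ ≤ 0 := by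
    intro a hab
    induction hab using Relation.TransGen.head_induction_on with
    | single hab =>
      rename_i a
      intro ha
      by_cases haB : a ∈ B
      · rw [← ha, h0 a haB]
      · rw [← step a b hab ha haB, h0 b hb]
    | head hac hcb ih =>
      rename_i a c
      intro ha
      by_cases haB : a ∈ B
      · rw [← ha, h0 a haB]
      · exact ih (step a c hac ha haB)
  exact key j₀ (hirr j₀ b hj) rfl

/-- The `u_k` form a partition of unity, by uniqueness in the Dirichlet problem. -/
lemma sum_harmonicExt {r : S → S → ℝ} (hr : ∀ j k, 0 ≤ r j k) (hirr : IrreducibleRates r)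
    {B : Finset S} (hB : B.Nonempty) {u : S → S → ℝ} (hu : HarmonicExt r B u) (i : S) :
    ∑ k : ↥B, u k.1 i = 1 := by
  have hone : ∀ j ∈ B, ∑ k : ↥B, u k.1 j = 1 := by
    intro j hj
    rw [Finset.sum_eq_single_of_mem (⟨j, hj⟩ : ↥B) (Finset.mem_univ _)]
    · simp [(hu j hj).1 j hj]
    · intro k _ hk
      rw [(hu k.1 k.2).1 j hj, if_neg]
      rintro rfl
      exact hk rfl
  have hharm : ∀ j ∉ B, ∑ l, r j l * (∑ k : ↥B, u k.1 l - ∑ k : ↥B, u k.1 j) = 0 := by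
    intro j hj
    simp_rw [← Finset.sum_sub_distrib, Finset.mul_sum]
    rw [Finset.sum_comm]
    exact Finset.sum_eq_zero fun k _ => (hu k.1 k.2).2 j hj
  have h1 := max_principle hr hirr hB (h := fun i => ∑ k : ↥B, u k.1 i - 1)
    (fun j hj => by rw [hone j hj, sub_self])
    (fun j hj => by
      rw [gen, ← hharm j hj]
      exact Finset.sum_congr rfl fun l _ => by ring) i
  have h2 := max_principle hr hirr hB (h := fun i => 1 - ∑ k : ↥B, u k.1 i)
    (fun j hj => by rw [hone j hj, sub_self])
    (fun j hj => by
      rw [gen, ← neg_eq_zero, ← Finset.sum_neg_distrib, ← hharm j hj]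
      exact Finset.sum_congr rfl fun l _ => by ring) i
  exact le_antisymm (sub_nonpos.1 h1) (sub_nonpos.1 h2)

/-- For `j ∈ B` the trace generator applied to the indicator of `k` agrees with the original
generator applied to `u_k`. The diagonal coordinate uses the partition of unity. -/
lemma vvecB_traceR {r : S → S → ℝ} (hr : ∀ j k, 0 ≤ r j k) (hirr : IrreducibleRates r)
    {B : Finset S} {u : S → S → ℝ} (hu : HarmonicExt r B u) (j k : ↥B) :
    vvecB (traceR r u) B j k = gen r (u k.1) j.1 := by
  have hB : B.Nonempty := ⟨j.1, j.2⟩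
  have hgen : ∀ k : ↥B, gen r (u k.1) j.1
      = ∑ l, r j.1 l * u k.1 l - (∑ l, r j.1 l) * (if j.1 = k.1 then 1 else 0) := by
    intro k
    rw [gen, (hu k.1 k.2).1 j.1 j.2, Finset.sum_mul, ← Finset.sum_sub_distrib]
    exact Finset.sum_congr rfl fun l _ => by ring
  have hexp : vvecB (traceR r u) B j k
      = traceR r u j.1 k.1 - (∑ l : ↥B, traceR r u j.1 l.1) * (if j = k then 1 else 0) := by
    simp [vvecB, Finset.sum_apply, Pi.single_apply, mul_sub, Finset.sum_sub_distrib,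
      eq_comm]
  have hsum : ∑ l : ↥B, traceR r u j.1 l.1
      = ∑ l, r j.1 l - ∑ l, r j.1 l * u j.1 l := by
    have h1 : ∑ l : ↥B, ∑ i, r j.1 i * u l.1 i = ∑ i, r j.1 i := by
      rw [Finset.sum_comm]
      exact Finset.sum_congr rfl fun i _ => by
        rw [← Finset.mul_sum, sum_harmonicExt hr hirr hB hu, mul_one]
    rw [← h1, eq_sub_iff_add_eq, ← Finset.add_sum_erase _ _ (Finset.mem_univ j),
      ← Finset.add_sum_erase (a := j) _ (fun l : ↥B => ∑ i, r j.1 i * u l.1 i)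
        (Finset.mem_univ j)]
    have h2 : ∑ l ∈ Finset.univ.erase j, traceR r u j.1 l.1
        = ∑ l ∈ Finset.univ.erase j, ∑ i, r j.1 i * u l.1 i :=
      Finset.sum_congr rfl fun l hl => by
        rw [traceR, if_neg]
        exact fun h => (Finset.ne_of_mem_erase hl) (Subtype.ext h.symm)
    rw [h2]
    simp [traceR]
  rw [hexp, hgen, hsum]
  by_cases hjk : j = k
  · subst hjk
    simp [traceR]
  · have hjk' : j.1 ≠ k.1 := fun h => hjk (Subtype.ext h)
    simp [traceR, hjk, hjk']

lemma upsL_vvec_mem {r : S → S → ℝ} (hr : ∀ j k, 0 ≤ r j k) (hirr : IrreducibleRates r)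
    {B : Finset S} {u : S → S → ℝ} (hu : HarmonicExt r B u) (j : ↥B) :
    upsL u B (vvec r j.1) = vvecB (traceR r u) B j := by
  funext k
  rw [upsL_vvec, vvecB_traceR hr hirr hu]

lemma upsL_vvec_not_mem {r : S → S → ℝ} {B : Finset S} {u : S → S → ℝ}
    (hu : HarmonicExt r B u) {j : S} (hj : j ∉ B) : upsL u B (vvec r j) = 0 := by
  funext k
  rw [upsL_vvec]
  exact (hu k.1 k.2).2 j hj

lemma upsL_ebasis_mem {r : S → S → ℝ} {B : Finset S} {u : S → S → ℝ}
    (hu : HarmonicExt r B u) (j : ↥B) : upsL u B (ebasis j.1) = Pi.single j 1 := by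
  funext k
  rw [upsL_ebasis, (hu k.1 k.2).1 j.1 j.2, Pi.single_apply]
  by_cases h : j = k
  · simp [h]
  · rw [if_neg fun h' => h (Subtype.ext h'), if_neg fun h' => h h'.symm]

/-- The restriction of `m` to `B` is invariant for the trace rates. -/
lemma trace_invariant {r : S → S → ℝ} (hr : ∀ j k, 0 ≤ r j k) (hirr : IrreducibleRates r)
    {m : S → ℝ} (hinv : ∀ f : S → ℝ, ∑ j, m j * gen r f j = 0)
    {B : Finset S} {u : S → S → ℝ} (hu : HarmonicExt r B u) (g : ↥B → ℝ) :
    ∑ j : ↥B, m j.1 * ∑ k : ↥B, traceR r u j.1 k.1 * (g k - g j) = 0 := by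
  have h1 : ∀ j : ↥B, ∑ k : ↥B, traceR r u j.1 k.1 * (g k - g j)
      = ∑ k : ↥B, g k * gen r (u k.1) j.1 := by
    intro j
    have h2 : ∀ k : ↥B, gen r (u k.1) j.1 = ∑ l : ↥B, traceR r u j.1 l.1 *
        ((Pi.single l 1 : ↥B → ℝ) k - (Pi.single j 1 : ↥B → ℝ) k) := by
      intro k
      rw [← vvecB_traceR hr hirr hu, vvecB]
      simp [Finset.sum_apply]
    simp_rw [h2, Finset.mul_sum]
    rw [Finset.sum_comm]
    refine Finset.sum_congr rfl fun l _ => ?_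
    have h3 : ∀ k : ↥B, g k * (traceR r u j.1 l.1 *
        ((Pi.single l 1 : ↥B → ℝ) k - (Pi.single j 1 : ↥B → ℝ) k))
        = traceR r u j.1 l.1 * (g k * (Pi.single l 1 : ↥B → ℝ) k
          - g k * (Pi.single j 1 : ↥B → ℝ) k) := fun k => by ring
    simp_rw [h3, ← Finset.mul_sum, Finset.sum_sub_distrib]
    simp [Pi.single_apply]
  simp_rw [h1, Finset.mul_sum]
  rw [Finset.sum_comm]
  refine Finset.sum_eq_zero fun k _ => ?_
  have h4 : ∑ j : ↥B, m j.1 * (g k * gen r (u k.1) j.1)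
      = g k * ∑ j : ↥B, m j.1 * gen r (u k.1) j.1 := by
    rw [Finset.mul_sum]
    exact Finset.sum_congr rfl fun j _ => by ring
  rw [h4, Finset.sum_coe_sort B (fun j => m j * gen r (u k.1) j),
    Finset.sum_subset (Finset.subset_univ B) (fun j _ hj => by
      rw [(hu k.1 k.2).2 j hj, mul_zero]), hinv, mul_zero]

/-! ### Energy identity and second-order terms -/

/-- Carré du champ identity: against an invariant measure, the energy of a vector-valued function
`w` for a (not necessarily symmetric) bilinear form `D` is expressed through the drift
`∑ k, ρ j k • (w k - w j)`. -/
lemma energy_identity {I E : Type*} [Fintype I] [NormedAddCommGroup E] [NormedSpace ℝ E]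
    (ρ : I → I → ℝ) (m : I → ℝ)
    (hinv : ∀ g : I → ℝ, ∑ j, m j * ∑ k, ρ j k * (g k - g j) = 0)
    (D : E →L[ℝ] E →L[ℝ] ℝ) (w : I → E) :
    ∑ j, ∑ k, m j * ρ j k * D (w k - w j) (w k - w j)
      = -∑ j, m j * (D (w j) (∑ k, ρ j k • (w k - w j))
          + D (∑ k, ρ j k • (w k - w j)) (w j)) := by
  rw [eq_neg_iff_add_eq_zero, ← Finset.sum_add_distrib, ← hinv fun j => D (w j) (w j)]
  refine Finset.sum_congr rfl fun j _ => ?_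
  simp only [map_sum, map_smul, sum_apply, smul_apply,
    smul_eq_mul, mul_add, Finset.mul_sum, ← Finset.sum_add_distrib]
  refine Finset.sum_congr rfl fun k _ => ?_
  simp only [map_sub, sub_apply]
  ring

lemma fderiv_comp_upsL (u : S → S → ℝ) (B : Finset S) {f : (↥B → ℝ) → ℝ}
    (hf : ContDiff ℝ 2 f) (x d : S → ℝ) :
    fderiv ℝ (fun y => f (Upsilon u B y)) x d
      = fderiv ℝ f (Upsilon u B x) (upsL u B d) := by
  have h : HasFDerivAt (fun y => f (upsL u B y))
      ((fderiv ℝ f (upsL u B x)).comp (upsL u B)) x :=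
    ((hf.differentiable (by norm_num)) _).hasFDerivAt.comp x (upsL u B).hasFDerivAt
  exact congrArg (fun T => T d) h.fderiv

lemma fderiv_fderiv_apply {E : Type*} [NormedAddCommGroup E] [NormedSpace ℝ E] {f : E → ℝ}
    (hf : ContDiff ℝ 2 f) (z v w : E) :
    fderiv ℝ (fun y => fderiv ℝ f y w) z v = fderiv ℝ (fderiv ℝ f) z v w := by
  have hd : DifferentiableAt ℝ (fderiv ℝ f) z :=
    (hf.fderiv_right (m := 1) (by norm_num)).differentiable (by norm_num) z
  have h := hd.hasFDerivAt.clm_apply (hasFDerivAt_const w z)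
  rw [h.fderiv]
  simp

lemma secondD_comp_upsL (u : S → S → ℝ) (B : Finset S) {f : (↥B → ℝ) → ℝ}
    (hf : ContDiff ℝ 2 f) (x d : S → ℝ) :
    secondD (fun y => f (Upsilon u B y)) d x
      = fderiv ℝ (fderiv ℝ f) (Upsilon u B x) (upsL u B d) (upsL u B d) := by
  have hg : Differentiable ℝ (fun y => fderiv ℝ f y (upsL u B d)) :=
    ((hf.fderiv_right (m := 1) (by norm_num)).differentiable (by norm_num)).clm_apply
      (differentiable_const _)
  have h : HasFDerivAt (fun y => fderiv ℝ f (upsL u B y) (upsL u B d))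
      ((fderiv ℝ (fun y => fderiv ℝ f y (upsL u B d)) (upsL u B x)).comp (upsL u B)) x :=
    (hg _).hasFDerivAt.comp x (upsL u B).hasFDerivAt
  simp only [secondD, fderiv_comp_upsL u B hf]
  rw [← fderiv_fderiv_apply hf]
  exact congrArg (fun T => T d) h.fderiv

/-- The second-order parts agree: both energies reduce to the drifts, which vanish off `B` and
coincide on `B`. -/
lemma second_order_eq {r : S → S → ℝ} (hr : ∀ j k, 0 ≤ r j k) (hirr : IrreducibleRates r)
    {m : S → ℝ} (hinv : ∀ f : S → ℝ, ∑ j, m j * gen r f j = 0)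
    {B : Finset S} {u : S → S → ℝ} (hu : HarmonicExt r B u)
    (D : (↥B → ℝ) →L[ℝ] (↥B → ℝ) →L[ℝ] ℝ) :
    ∑ j, ∑ k, m j * r j k * D (upsL u B (ebasis k - ebasis j)) (upsL u B (ebasis k - ebasis j))
      = ∑ j : ↥B, ∑ k : ↥B, m j.1 * traceR r u j.1 k.1 *
          D ((Pi.single k 1 : ↥B → ℝ) - Pi.single j 1)
            ((Pi.single k 1 : ↥B → ℝ) - Pi.single j 1) := by
  have h1 := energy_identity r m hinv D fun j => upsL u B (ebasis j)
  have h2 := energy_identity (fun j k : ↥B => traceR r u j.1 k.1) (fun j => m j.1)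
    (trace_invariant hr hirr hinv hu) D fun j => (Pi.single j 1 : ↥B → ℝ)
  have hv : ∀ j, ∑ k, r j k • (upsL u B (ebasis k) - upsL u B (ebasis j))
      = upsL u B (vvec r j) := fun j => by simp [vvec, map_sum]
  simp only [map_sub (upsL u B)]
  rw [h1, h2]
  simp only [hv]
  congr 1
  rw [← Finset.sum_subset (Finset.subset_univ B) (fun j _ hj => by
      rw [upsL_vvec_not_mem hu hj]; simp), ← Finset.sum_coe_sort B]
  refine Finset.sum_congr rfl fun j _ => ?_
  rw [upsL_vvec_mem hr hirr hu, upsL_ebasis_mem hu]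
  rfl

lemma Upsilon_eq_restB {r : S → S → ℝ} {B : Finset S} {u : S → S → ℝ}
    (hu : HarmonicExt r B u) {x : S → ℝ} (hx : ∀ j ∉ B, x j = 0) :
    Upsilon u B x = restB B x := by
  funext k
  rw [Upsilon, restB, Finset.sum_eq_single_of_mem k.1 (Finset.mem_univ _)]
  · simp [(hu k.1 k.2).1 k.1 k.2]
  · intro j _ hj
    by_cases hjB : j ∈ B
    · rw [(hu k.1 k.2).1 j hjB, if_neg hj, zero_mul]
    · rw [hx j hjB, mul_zero]

/-- harmonic extension F = f ∘ Υ of a function f ∈ C²(Σ_B). -/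
theorem statement12
    (S : Type) [Fintype S] [DecidableEq S] (hS : 2 ≤ Fintype.card S)
    (r : S → S → ℝ) (hr : ∀ j k, 0 ≤ r j k) (hrdiag : ∀ j, r j j = 0)
    (hirr : IrreducibleRates r)
    (m : S → ℝ) (hm : ∀ j, 0 < m j)
    (hinv : ∀ f : S → ℝ, ∑ j, m j * gen r f j = 0)
    (b : ℝ) (hb : 1 < b)
    (B : Finset S) (hBproper : B ≠ Finset.univ) (hBcard : 2 ≤ B.card)
    (u : S → S → ℝ) (hu : HarmonicExt r B u)
    (f : (↥B → ℝ) → ℝ) (hf : ContDiff ℝ 2 f) :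
    (∀ x ∈ stdSimplex ℝ S, (∀ j ∉ B, x j = 0) →
        f (Upsilon u B x) = f (restB B x)) ∧
    (∀ j ∉ B, ∀ x ∈ stdSimplex ℝ S,
        fderiv ℝ (fun y => f (Upsilon u B y)) x (vvec r j) = 0) ∧
    (∀ j ∉ B, memD r j (fun y => f (Upsilon u B y))) ∧
    (∀ x ∈ stdSimplex ℝ S, (∀ j ∉ B, x j = 0) → (∀ j ∈ B, 0 < x j) →
        Lop r m b (fun y => f (Upsilon u B y)) x
          = LopB (traceR r u) m b B f (restB B x)) := by
  have hzero : ∀ j ∉ B, ∀ x : S → ℝ,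
      fderiv ℝ (fun y => f (Upsilon u B y)) x (vvec r j) = 0 := fun j hj x => by
    rw [fderiv_comp_upsL u B hf, upsL_vvec_not_mem hu hj, map_zero]
  refine ⟨fun x _ hx => by rw [Upsilon_eq_restB hu hx], fun j hj x _ => hzero j hj x,
    fun j hj => ⟨hf.comp (upsL u B).contDiff, ?_⟩, fun x _ hx hpos => ?_⟩
  · simp only [hzero j hj, zero_div, ite_self]
    exact continuousOn_const
  · have hUx := Upsilon_eq_restB hu hx
    rw [Lop, LopB]
    simp only [secondD_comp_upsL u B hf, fderiv_comp_upsL u B hf, fderiv_fderiv_apply hf, hUx]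
    rw [second_order_eq hr hirr hinv hu]
    congr 2
    rw [← Finset.sum_subset (Finset.subset_univ B) (fun j _ hj => by simp [hx j hj]),
      ← Finset.sum_coe_sort B]
    refine Finset.sum_congr rfl fun j _ => ?_
    rw [upsL_vvec_mem hr hirr hu, if_pos (hpos j.1 j.2).ne',
      if_pos (show 0 < restB B x j from hpos j.1 j.2)]
    rfl
end
end
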